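/- arXiv:2209.02657 — 4 statements merged into one kernel-verified Lean document; each statement's English description precedes it below -/
import Mathlib

section
/- Let q be any prime power and let Σ be a nonempty family of planes of PG(3,q) such that every point of PG(3,q) lies in exactly q²−q or exactly q² planes of Σ, and every line of PG(3,q) that is contained in at least one plane of Σ is contained in at least q−1 planes of Σ. Then there exists a nonsingular hyperbolic quadratic form φ on F^4, with hyperbolic quadric Q, such that Σ is exactly the set of all planes of PG(3,q) containing exactly q+1 points of Q, i.e. the planes meeting Q in an irreducible conic. -/
/-
Dualise: the equations of the planes outside `S`, together with zero, form a cone `A` in the dual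
space, which is again four-dimensional. The hypothesis on points says that the plane sections of
`A` have the sizes of those of a hyperbolic quadric, and the hypothesis on lines says that a line
carrying three points of `A` lies on `A`. Such an `A` is a hyperbolic quadric.

Since the section sizes take only two values, their first two moments give a quadratic equation
for `|A|`, only one root of which is an integer congruent to `1` modulo `q - 1`. Averaging over the
planes through a point `a` of `A` that miss a given line through `a` produces a large section;
projecting it from `a`, the pigeonhole principle yields a second line of `A` through `a`. So every
point is on two lines of `A`, these lines contain a skew quadrilateral, and in the coordinates it
provides `A` has an equation `x₀₀ x₁₁ = x₀₁ x₁₀`, that is, `A` is the cone of singular `2 × 2`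
matrices.

The trace form identifies the original space with `2 × 2` matrices as well, and the plane
`tr (M X) = 0` meets the quadric `det X = 0` in exactly `q + 1` points if and only if `det M ≠ 0`.
-/

namespace HyperbolicQuadric

open Module Submodule

section Counting

variable {F W : Type*} [Field F] [AddCommGroup W] [Module F W]

/-- The points of the projective space of `W` that lie on a cone `C` of vectors. -/
def pointsIn (F : Type*) {W : Type*} [Field F] [AddCommGroup W] [Module F W] (C : Set W) :
    Set (Submodule F W) :=
  {p | finrank F p = 1 ∧ (p : Set W) ⊆ C}

/-- The number of vectors of `A` on the hyperplane with equation `f`. -/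
noncomputable def sectionCard (A : Set W) (f : Dual F W) : ℕ :=
  {w ∈ A | f w = 0}.ncard

lemma span_singleton_eq_of_finrank_eq_one {p : Submodule F W} (hp : finrank F p = 1) {w : W}
    (hw : w ∈ p) (hw₀ : w ≠ 0) : F ∙ w = p :=
  have : Module.Finite F p := finite_of_finrank_eq_succ hp
  eq_of_le_of_finrank_eq ((span_singleton_le_iff_mem w p).2 hw)
    (by rw [finrank_span_singleton hw₀, hp])

lemma mem_dualAnnihilator_span_singleton {w : W} {f : Dual F W} :
    f ∈ (F ∙ w).dualAnnihilator ↔ f w = 0 := by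
  rw [mem_dualAnnihilator, ← LinearMap.mem_ker, ← span_singleton_le_iff_mem]
  rfl

lemma finrank_inf_lt_of_ne {L M : Submodule F W} [FiniteDimensional F L] [FiniteDimensional F M]
    (h : finrank F L = finrank F M) (hLM : L ≠ M) :
    finrank F (L ⊓ M : Submodule F W) < finrank F L :=
  finrank_lt_finrank_of_lt (inf_lt_left.2 fun hle => hLM (eq_of_le_of_finrank_eq hle h))

lemma ncard_coe_submodule (X : Submodule F W) [Module.Finite F X] :
    (X : Set W).ncard = Nat.card F ^ finrank F X := by
  rw [← Nat.card_coe_set_eq]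
  exact natCard_eq_pow_finrank

lemma ncard_eq_mul_ncard_of_fiber {α β : Type*} [Finite α] {f : α → β} {s : Set α} {t : Set β}
    (ht : t.Finite) (hst : Set.MapsTo f s t) {n : ℕ}
    (hn : ∀ b ∈ t, {a ∈ s | f a = b}.ncard = n) : s.ncard = n * t.ncard := by
  classical
  have hs := s.toFinite
  rw [Set.ncard_eq_toFinset_card s hs, Set.ncard_eq_toFinset_card t ht,
    Finset.card_eq_sum_card_fiberwise (f := f) (t := ht.toFinset) (by simpa using hst),
    Finset.sum_const_nat (m := n), mul_comm]
  intro b hb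
  rw [← hn b (ht.mem_toFinset.1 hb), ← Set.ncard_coe_finset]
  simp

lemma span_singleton_subset_of_smul_mem {C : Set W} (smul_mem : ∀ (a : F), ∀ w ∈ C, a • w ∈ C)
    {w : W} (hw : w ∈ C) : ((F ∙ w : Submodule F W) : Set W) ⊆ C := by
  intro z hz
  obtain ⟨a, rfl⟩ := mem_span_singleton.1 hz
  exact smul_mem a w hw

lemma span_singleton_mem_pointsIn {C : Set W} (smul_mem : ∀ (a : F), ∀ w ∈ C, a • w ∈ C) {w : W}
    (hw : w ∈ C) (hw₀ : w ≠ 0) : F ∙ w ∈ pointsIn F C :=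
  ⟨finrank_span_singleton hw₀, span_singleton_subset_of_smul_mem smul_mem hw⟩

lemma ncard_pointsIn [Finite W] {C : Set W} (zero_mem : 0 ∈ C)
    (smul_mem : ∀ (a : F), ∀ w ∈ C, a • w ∈ C) :
    (Nat.card F - 1) * (pointsIn F C).ncard + 1 = C.ncard := by
  rw [← Set.ncard_sdiff_singleton_add_one zero_mem, ncard_eq_mul_ncard_of_fiber
    (f := fun w => F ∙ w) (pointsIn F C).toFinite fun w hw =>
      span_singleton_mem_pointsIn smul_mem hw.1 hw.2]
  rintro p ⟨hp, hpC⟩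
  have fiber_eq : {w ∈ C \ {0} | F ∙ w = p} = (p : Set W) \ {0} := by
    ext w
    constructor
    · rintro ⟨⟨-, hw₀⟩, rfl⟩
      exact ⟨mem_span_singleton_self w, hw₀⟩
    · rintro ⟨hw, hw₀⟩
      exact ⟨⟨hpC hw, hw₀⟩, span_singleton_eq_of_finrank_eq_one hp hw hw₀⟩
  rw [fiber_eq, Set.ncard_sdiff_singleton_of_mem p.zero_mem, ncard_coe_submodule, hp, pow_one]

lemma three_le_ncard_pointsIn [Finite W] {C : Set W}
    (smul_mem : ∀ (a : F), ∀ w ∈ C, a • w ∈ C) {x y : W} (hxy : LinearIndependent F ![x, y])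
    (hx : x ∈ C) (hy : y ∈ C) (hadd : x + y ∈ C) : 3 ≤ (pointsIn F C).ncard := by
  have hx₀ : x ≠ 0 := hxy.ne_zero 0
  have hy₀ : y ≠ 0 := hxy.ne_zero 1
  have notMem (a : F) : a • x ≠ y := (LinearIndependent.pair_iff' hx₀).1 hxy a
  have hadd₀ : x + y ≠ 0 := fun h =>
    notMem (-1) (by rw [neg_one_smul, neg_eq_of_add_eq_zero_right h])
  have span_x_ne : F ∙ x ≠ F ∙ y := fun h => by
    obtain ⟨a, ha⟩ := mem_span_singleton.1 (h ▸ mem_span_singleton_self y : y ∈ F ∙ x)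
    exact notMem a ha
  have span_x_ne_add : F ∙ x ≠ F ∙ (x + y) := fun h => by
    obtain ⟨a, ha⟩ := mem_span_singleton.1 (h ▸ mem_span_singleton_self _ : x + y ∈ F ∙ x)
    exact notMem (a - 1) (by rw [sub_smul, ha, one_smul, add_sub_cancel_left])
  have span_y_ne_add : F ∙ y ≠ F ∙ (x + y) := fun h => by
    obtain ⟨a, ha⟩ := mem_span_singleton.1 (h ▸ mem_span_singleton_self _ : x + y ∈ F ∙ y)
    have := hxy.eq_of_pair (s := 0) (t := a) (s' := 1) (t' := 1)
      (by rw [zero_smul, zero_add, one_smul, one_smul, ha])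
    exact zero_ne_one this.1
  have : ({F ∙ x, F ∙ y, F ∙ (x + y)} : Set (Submodule F W)).ncard = 3 :=
    Set.ncard_eq_three.2 ⟨_, _, _, span_x_ne, span_x_ne_add, span_y_ne_add, rfl⟩
  rw [← this]
  refine Set.ncard_le_ncard ?_
  rintro _ (rfl | rfl | rfl)
  · exact span_singleton_mem_pointsIn smul_mem hx hx₀
  · exact span_singleton_mem_pointsIn smul_mem hy hy₀
  · exact span_singleton_mem_pointsIn smul_mem hadd hadd₀

lemma three_mul_add_one_le_ncard_inter_span [Finite W] {C : Set W} (zero_mem : 0 ∈ C)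
    (smul_mem : ∀ (a : F), ∀ w ∈ C, a • w ∈ C) {x y : W} (hxy : LinearIndependent F ![x, y])
    (hx : x ∈ C) (hy : y ∈ C) (hadd : x + y ∈ C) :
    (Nat.card F - 1) * 3 + 1 ≤ (C ∩ span F {x, y} : Set W).ncard := by
  have smul_mem_inter : ∀ (a : F), ∀ w ∈ C ∩ span F {x, y}, a • w ∈ C ∩ span F {x, y} :=
    fun a w hw => ⟨smul_mem a w hw.1, (span F {x, y}).smul_mem a hw.2⟩
  have hxs : x ∈ span F {x, y} := mem_span_of_mem (by simp)
  have hys : y ∈ span F {x, y} := mem_span_of_mem (by simp)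
  have zero_mem_inter : 0 ∈ C ∩ span F {x, y} := ⟨zero_mem, (span F {x, y}).zero_mem⟩
  rw [← ncard_pointsIn zero_mem_inter smul_mem_inter]
  gcongr
  exact three_le_ncard_pointsIn smul_mem_inter hxy ⟨hx, hxs⟩ ⟨hy, hys⟩ ⟨hadd, add_mem hxs hys⟩

lemma span_pair_subset_of_not_linearIndependent {C : Set W}
    (smul_mem : ∀ (a : F), ∀ w ∈ C, a • w ∈ C) {x y : W} (hxy : ¬LinearIndependent F ![x, y])
    (hx : x ∈ C) (hy : y ∈ C) : (span F {x, y} : Set W) ⊆ C := by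
  by_cases hx₀ : x = 0
  · rw [hx₀, span_insert_zero]
    exact span_singleton_subset_of_smul_mem smul_mem hy
  · rw [LinearIndependent.pair_iff' hx₀] at hxy
    push Not at hxy
    obtain ⟨a, rfl⟩ := hxy
    have hle : span F {x, a • x} ≤ F ∙ x := span_le.2
      (Set.pair_subset (mem_span_singleton_self x) (mem_span_singleton.2 ⟨a, rfl⟩))
    exact Set.Subset.trans hle (span_singleton_subset_of_smul_mem smul_mem hx)

lemma span_pair_subset_of_ncard_inter_lt [Finite W] {C : Set W} (zero_mem : 0 ∈ C)
    (smul_mem : ∀ (a : F), ∀ w ∈ C, a • w ∈ C) {x y : W} (hx : x ∈ C) (hy : y ∈ C)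
    (hadd : x + y ∈ C)
    (hlt : LinearIndependent F ![x, y] → ¬(span F {x, y} : Set W) ⊆ C →
      (C ∩ span F {x, y} : Set W).ncard < (Nat.card F - 1) * 3 + 1) :
    (span F {x, y} : Set W) ⊆ C := by
  by_cases hxy : LinearIndependent F ![x, y]
  · by_contra hsub
    exact (hlt hxy hsub).not_ge
      (three_mul_add_one_le_ncard_inter_span zero_mem smul_mem hxy hx hy hadd)
  · exact span_pair_subset_of_not_linearIndependent smul_mem hxy hx hy

lemma exists_add_smul_mem_of_le_ncard [Finite F] [Finite W] {X : Submodule F W} {n : ℕ}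
    (hX : finrank F X = n + 1) {a : W} (ha₀ : a ≠ 0) (haX : a ∈ X) {B : Set W}
    (hB : B ⊆ X) (hcard : Nat.card F ^ n ≤ (B \ (F ∙ a : Submodule F W)).ncard) :
    ∃ x ∈ B, x ∉ F ∙ a ∧ ∃ c : F, c ≠ 0 ∧ x + c • a ∈ B := by
  have := Module.finite_of_finite F (M := W ⧸ F ∙ a)
  have finrank_map : finrank F (X.map (F ∙ a).mkQ) = n := by
    have rank_nullity := ((F ∙ a).mkQ.domRestrict X).finrank_range_add_finrank_ker
    rw [LinearMap.range_domRestrict, LinearMap.ker_domRestrict, ker_mkQ, ← submoduleOf,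
      (submoduleOfEquivOfLe ((span_singleton_le_iff_mem a X).2 haX)).finrank_eq,
      finrank_span_singleton ha₀, hX] at rank_nullity
    exact Nat.add_right_cancel rank_nullity
  have card_lt : ((X.map (F ∙ a).mkQ : Set (W ⧸ F ∙ a)) \ {0}).ncard
      < (B \ (F ∙ a : Submodule F W)).ncard := by
    rw [Set.ncard_sdiff_singleton_of_mem (zero_mem _), ncard_coe_submodule, finrank_map]
    exact (Nat.sub_one_lt (pow_pos Nat.card_pos n).ne').trans_le hcard
  obtain ⟨x, ⟨hxB, hxa⟩, y, ⟨hyB, -⟩, hxy, heq⟩ :=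
    Set.exists_ne_map_eq_of_ncard_lt_of_maps_to card_lt (f := (F ∙ a).mkQ) (by
      rintro w ⟨hwB, hwa⟩
      exact ⟨mem_map_of_mem (hB hwB), fun h => hwa ((Submodule.Quotient.mk_eq_zero _).1 h)⟩)
  obtain ⟨c, hc⟩ := mem_span_singleton.1 ((Submodule.Quotient.eq _).1 heq.symm)
  refine ⟨x, hxB, hxa, c, ?_, by rwa [hc, add_sub_cancel]⟩
  rintro rfl
  exact hxy (sub_eq_zero.1 (hc.symm.trans (zero_smul F a))).symm

lemma natCard_mul_natCard_dualAnnihilator_sup_span [FiniteDimensional F W] {X : Submodule F W}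
    {a : W} (ha : a ∉ X) :
    Nat.card F * Nat.card (X ⊔ F ∙ a).dualAnnihilator = Nat.card X.dualAnnihilator := by
  have hrank := finrank_sup_span_singleton ha
  have h₁ := Subspace.finrank_add_finrank_dualAnnihilator_eq (X ⊔ F ∙ a)
  have h₂ := Subspace.finrank_add_finrank_dualAnnihilator_eq X
  rw [natCard_eq_pow_finrank (K := F) (V := (X ⊔ F ∙ a).dualAnnihilator),
    natCard_eq_pow_finrank (K := F) (V := X.dualAnnihilator), ← pow_succ']
  congr 1
  omega

open scoped Classical in
lemma card_filter_mem_dualAnnihilator [Fintype (Dual F W)] (X : Submodule F W) :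
    ({f | f ∈ X.dualAnnihilator} : Finset (Dual F W)).card = Nat.card X.dualAnnihilator :=
  (Fintype.card_subtype _).symm.trans Nat.card_eq_fintype_card.symm

open scoped Classical in
lemma sum_sectionCard_eq_sum_natCard [Fintype (Dual F W)] [Fintype W] (A : Set W)
    (X : Submodule F W) :
    ∑ f with f ∈ X.dualAnnihilator, sectionCard A f
      = ∑ a ∈ A.toFinset, Nat.card (X ⊔ F ∙ a).dualAnnihilator := by
  convert Finset.sum_card_bipartiteAbove_eq_sum_card_bipartiteBelow
    (fun (f : Dual F W) a => f a = 0)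
    (s := Finset.univ.filter (· ∈ X.dualAnnihilator)) (t := A.toFinset) using 2 with f _ a
  · rw [sectionCard, ← Set.ncard_coe_finset]
    simp [Finset.bipartiteAbove]
  · rw [← SetLike.coe_sort_coe, Nat.card_coe_set_eq, ← Set.ncard_coe_finset]
    congr 1
    ext f
    simp [Finset.bipartiteBelow, dualAnnihilator_sup_eq, mem_dualAnnihilator]

open scoped Classical in
lemma sum_sectionCard [Fintype (Dual F W)] [Finite W] (A : Set W) (X : Submodule F W) :
    Nat.card F * ∑ f with f ∈ X.dualAnnihilator, sectionCard A f
        + Nat.card X.dualAnnihilator * (A ∩ X).ncard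
      = Nat.card X.dualAnnihilator * (Nat.card F * (A ∩ X).ncard + A.ncard) := by
  have := Fintype.ofFinite W
  have term (a : W) : Nat.card F * Nat.card (X ⊔ F ∙ a).dualAnnihilator
      + (if a ∈ X then Nat.card X.dualAnnihilator else 0)
        = Nat.card X.dualAnnihilator * ((if a ∈ X then Nat.card F else 0) + 1) := by
    split_ifs with ha
    · rw [sup_eq_left.2 ((span_singleton_le_iff_mem a X).2 ha)]
      ring
    · rw [natCard_mul_natCard_dualAnnihilator_sup_span ha]
      ring
  have card_inter : (A ∩ X).ncard = {a ∈ A.toFinset | a ∈ X}.card := by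
    rw [← Set.ncard_coe_finset]
    congr 1
    ext a
    simp
  have := Finset.sum_congr (rfl : A.toFinset = _) fun a _ => term a
  simp only [Finset.sum_add_distrib, ← Finset.mul_sum, ← Finset.sum_filter, Finset.sum_const,
    smul_eq_mul, ← card_inter, mul_one, ← Set.ncard_eq_toFinset_card',
    ← sum_sectionCard_eq_sum_natCard] at this
  linarith

open scoped Classical in
lemma sum_sectionCard_sq [Fintype (Dual F W)] [Fintype W] (A : Set W) :
    ∑ f : Dual F W, sectionCard A f ^ 2
      = ∑ a ∈ A.toFinset, ∑ f with f ∈ (F ∙ a).dualAnnihilator, sectionCard A f := by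
  have card_zeros (f : Dual F W) : sectionCard A f = {a ∈ A.toFinset | f a = 0}.card := by
    rw [sectionCard, ← Set.ncard_coe_finset]
    simp
  simp only [mem_dualAnnihilator_span_singleton, Finset.sum_filter]
  rw [Finset.sum_comm]
  refine Finset.sum_congr rfl fun f _ => ?_
  rw [← Finset.sum_filter, Finset.sum_const, ← card_zeros, smul_eq_mul, sq]

end Counting

/-- A cone `A` of vectors of a four-dimensional space with the plane intersection numbers of a
hyperbolic quadric, containing every line that carries three of its points. -/
structure IsQuasiQuadric (F : Type*) {W : Type*} [Field F] [AddCommGroup W] [Module F W]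
    (A : Set W) : Prop where
  finrank_eq : finrank F W = 4
  zero_mem : 0 ∈ A
  smul_mem : ∀ (a : F), ∀ w ∈ A, a • w ∈ A
  sectionCard_eq : ∀ f : Dual F W, f ≠ 0 →
    sectionCard A f = Nat.card F ^ 2 ∨ sectionCard A f + Nat.card F = 2 * Nat.card F ^ 2
  span_pair_subset : ∀ x ∈ A, ∀ y ∈ A, x + y ∈ A → (span F {x, y} : Set W) ⊆ A

namespace IsQuasiQuadric

variable {F W : Type*} [Field F] [AddCommGroup W] [Module F W] {A : Set W}

lemma sum_deviation_mul_deviation [Fintype (Dual F W)] (hA : IsQuasiQuadric F A) :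
    ∑ f : Dual F W, ((sectionCard A f - Nat.card F ^ 2) *
        (sectionCard A f - (2 * Nat.card F ^ 2 - Nat.card F)) : ℤ)
      = (A.ncard - Nat.card F ^ 2) * (A.ncard - (2 * Nat.card F ^ 2 - Nat.card F)) := by
  rw [Finset.sum_eq_single 0]
  · simp [sectionCard]
  · intro f _ hf
    rcases hA.sectionCard_eq f hf with h | h
    · simp [h]
    · zify at h
      simp [← h]
  · simp

section Cardinality

variable [Finite W]

lemma natCard_dualAnnihilator (hA : IsQuasiQuadric F A) {X : Submodule F W} {m n : ℕ}
    (hX : finrank F X = m) (hmn : m + n = 4) :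
    Nat.card X.dualAnnihilator = Nat.card F ^ n := by
  have := Subspace.finrank_add_finrank_dualAnnihilator_eq X
  have := hA.finrank_eq
  rw [natCard_eq_pow_finrank (K := F)]
  congr
  omega

variable [Fintype (Dual F W)]

lemma sum_sectionCard_univ (hA : IsQuasiQuadric F A) :
    Nat.card F * ∑ f : Dual F W, sectionCard A f + Nat.card F ^ 4
      = Nat.card F ^ 4 * (Nat.card F + A.ncard) := by
  have := sum_sectionCard A (⊥ : Submodule F W)
  rw [hA.natCard_dualAnnihilator (finrank_bot F W) (zero_add 4)] at this
  simpa [Set.inter_eq_right.2 (Set.singleton_subset_iff.2 hA.zero_mem)] using this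

open scoped Classical in
lemma sum_sectionCard_point (hA : IsQuasiQuadric F A) {a : W} (ha : a ∈ A) (ha₀ : a ≠ 0) :
    Nat.card F * ∑ f with f ∈ (F ∙ a).dualAnnihilator, sectionCard A f + Nat.card F ^ 4
      = Nat.card F ^ 3 * (Nat.card F ^ 2 + A.ncard) := by
  have := sum_sectionCard A (F ∙ a)
  rw [hA.natCard_dualAnnihilator (n := 3) (finrank_span_singleton ha₀) rfl,
    Set.inter_eq_right.2 (span_singleton_subset_of_smul_mem hA.smul_mem ha),
    ncard_coe_submodule, finrank_span_singleton ha₀] at this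
  linarith

lemma sum_sectionCard_sq_univ (hA : IsQuasiQuadric F A) :
    Nat.card F * ∑ f : Dual F W, (sectionCard A f : ℤ) ^ 2
      = Nat.card F ^ 4 * (Nat.card F + A.ncard) - Nat.card F ^ 4
        + (A.ncard - 1) * (Nat.card F ^ 3 * (Nat.card F ^ 2 + A.ncard) - Nat.card F ^ 4) := by
  classical
  have := Fintype.ofFinite W
  have h₀ : 0 ∈ A.toFinset := Set.mem_toFinset.2 hA.zero_mem
  have card_erase : ((A.toFinset.erase 0).card : ℤ) = A.ncard - 1 := by
    rw [Finset.cast_card_erase_of_mem h₀, Set.ncard_eq_toFinset_card']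
  have term_zero := hA.sum_sectionCard_univ
  have term {a : W} (ha : a ∈ A.toFinset.erase 0) :=
    hA.sum_sectionCard_point (Set.mem_toFinset.1 (Finset.mem_of_mem_erase ha))
      (Finset.ne_of_mem_erase ha)
  zify at term_zero term
  have sum_sq := congrArg (Nat.cast (R := ℤ)) (sum_sectionCard_sq (F := F) A)
  push_cast at sum_sq
  rw [sum_sq, Finset.mul_sum, ← Finset.add_sum_erase _ _ h₀,
    Finset.sum_congr rfl fun a ha => eq_sub_of_add_eq (term ha), Finset.sum_const, nsmul_eq_mul,
    card_erase, ← term_zero]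
  simp

end Cardinality

variable [Finite F] [Finite W]

lemma ncard_eq_or_ncard_eq (hA : IsQuasiQuadric F A) :
    (A.ncard : ℤ) = Nat.card F ^ 3 + Nat.card F ^ 2 - Nat.card F ∨
      ((Nat.card F + 1) * A.ncard : ℤ)
        = Nat.card F ^ 2 * (2 * Nat.card F ^ 2 - Nat.card F + 1) := by
  have := Module.finite_of_finite F (M := Dual F W)
  have := Fintype.ofFinite (Dual F W)
  have one_lt : 1 < Nat.card F := Finite.one_lt_card
  have card_dual : (Fintype.card (Dual F W) : ℤ) = (Nat.card F : ℤ) ^ 4 := by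
    rw [← Nat.card_eq_fintype_card, natCard_eq_pow_finrank (K := F), Subspace.dual_finrank_eq,
      hA.finrank_eq, Nat.cast_pow]
  have first_moment := hA.sum_sectionCard_univ
  have second_moment := hA.sum_sectionCard_sq_univ
  have mixed_moment := hA.sum_deviation_mul_deviation
  zify at first_moment one_lt
  simp only [sub_mul, mul_sub, Finset.sum_sub_distrib, ← Finset.mul_sum, ← Finset.sum_mul, ← sq,
    Finset.sum_const, Finset.card_univ, nsmul_eq_mul, card_dual] at mixed_moment
  generalize (Nat.card F : ℤ) = q at *
  have quadratic : q * (q - 1) * ((A.ncard - (q ^ 3 + q ^ 2 - q)) *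
      ((q + 1) * A.ncard - q ^ 2 * (2 * q ^ 2 - q + 1))) = 0 := by
    linear_combination q * mixed_moment - second_moment + (3 * q ^ 2 - q) * first_moment
  have factor_ne : q * (q - 1) ≠ 0 := mul_ne_zero (by omega) (by omega)
  rcases mul_eq_zero.1 ((mul_eq_zero.1 quadratic).resolve_left factor_ne) with h | h
  · exact .inl (sub_eq_zero.1 h)
  · exact .inr (sub_eq_zero.1 h)

lemma ncard_add (hA : IsQuasiQuadric F A) :
    A.ncard + Nat.card F = Nat.card F ^ 3 + Nat.card F ^ 2 := by
  have one_lt : 1 < Nat.card F := Finite.one_lt_card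
  have card_points := ncard_pointsIn hA.zero_mem hA.smul_mem
  zify [one_lt.le] at one_lt card_points ⊢
  rcases hA.ncard_eq_or_ncard_eq with h | h
  · rw [h, sub_add_cancel]
  generalize (Nat.card F : ℤ) = q at *
  rw [← card_points] at h
  have two_eq : 2 = (q + 1) * (2 * q ^ 2 - q + 3 - (pointsIn F A).ncard) :=
    mul_left_cancel₀ (sub_ne_zero.2 one_lt.ne') (by linear_combination h)
  have := Int.le_of_dvd two_pos ⟨_, two_eq⟩
  omega

open scoped Classical in
lemma sum_sectionCard_line [Fintype (Dual F W)] (hA : IsQuasiQuadric F A) {L : Submodule F W}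
    (hL : finrank F L = 2) :
    ∑ f with f ∈ L.dualAnnihilator, sectionCard A f + Nat.card F * (A ∩ L).ncard + Nat.card F ^ 2
      = Nat.card F ^ 2 * (A ∩ L).ncard + Nat.card F ^ 4 + Nat.card F ^ 3 := by
  have total := sum_sectionCard A L
  have card_add := hA.ncard_add
  rw [hA.natCard_dualAnnihilator (n := 2) hL rfl] at total
  refine Nat.eq_of_mul_eq_mul_left (Nat.card_pos (α := F)) ?_
  zify at *
  linear_combination total + (Nat.card F ^ 2 : ℤ) * card_add

lemma sectionCard_add_of_line_le_ker (hA : IsQuasiQuadric F A) {L : Submodule F W}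
    (hL : finrank F L = 2) (hLA : (L : Set W) ⊆ A) {f : Dual F W} (hf : f ≠ 0)
    (hLf : L ≤ f.ker) :
    sectionCard A f + Nat.card F = 2 * Nat.card F ^ 2 := by
  classical
  have := Module.finite_of_finite F (M := Dual F W)
  have := Fintype.ofFinite (Dual F W)
  have q_pos : 0 < Nat.card F := Nat.card_pos
  have card_annihilator := hA.natCard_dualAnnihilator (n := 2) hL rfl
  have zero_mem_filter : (0 : Dual F W) ∈ ({f | f ∈ L.dualAnnihilator} : Finset (Dual F W)) := by
    simp
  have sectionCard_le : ∀ f ∈ ({f | f ∈ L.dualAnnihilator} : Finset (Dual F W)).erase 0,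
      sectionCard A f + Nat.card F ≤ 2 * Nat.card F ^ 2 := by
    intro f hf
    have : Nat.card F ≤ Nat.card F ^ 2 := Nat.le_self_pow two_ne_zero _
    rcases hA.sectionCard_eq f (Finset.ne_of_mem_erase hf) with h | h <;> omega
  have sum_eq : ∑ f ∈ ({f | f ∈ L.dualAnnihilator} : Finset (Dual F W)).erase 0,
      (sectionCard A f + Nat.card F) = ∑ f ∈ ({f | f ∈ L.dualAnnihilator} : Finset _).erase 0,
        2 * Nat.card F ^ 2 := by
    have total := hA.sum_sectionCard_line hL
    have card_add := hA.ncard_add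
    have sectionCard_zero : sectionCard A (0 : Dual F W) = A.ncard := by simp [sectionCard]
    rw [Set.inter_eq_right.2 hLA, ncard_coe_submodule, hL,
      ← Finset.add_sum_erase _ _ zero_mem_filter, sectionCard_zero] at total
    rw [Finset.sum_add_distrib, Finset.sum_const, Finset.sum_const,
      Finset.card_erase_of_mem zero_mem_filter, card_filter_mem_dualAnnihilator, card_annihilator,
      smul_eq_mul, smul_eq_mul]
    zify [Nat.one_le_pow 2 _ q_pos] at total card_add ⊢
    linear_combination total + (-1 : ℤ) * card_add
  refine (Finset.sum_eq_sum_iff_of_le sectionCard_le).1 sum_eq f (Finset.mem_erase.2 ⟨hf, ?_⟩)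
  simpa [mem_dualAnnihilator] using fun w hw => hLf hw

open scoped Classical in
lemma sum_sectionCard_point_sdiff_line [Fintype (Dual F W)] (hA : IsQuasiQuadric F A) {a : W}
    (ha : a ∈ A) (ha₀ : a ≠ 0) {L : Submodule F W} (hL : finrank F L = 2) (haL : a ∈ L) :
    ∑ f ∈ ({f | f ∈ (F ∙ a).dualAnnihilator} : Finset (Dual F W)) \
        ({f | f ∈ L.dualAnnihilator} : Finset (Dual F W)), (sectionCard A f - Nat.card F ^ 2 : ℤ)
      = Nat.card F * (Nat.card F - 1) *
          (2 * Nat.card F ^ 2 - Nat.card F - (A ∩ L).ncard) := by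
  have sub : ({f | f ∈ L.dualAnnihilator} : Finset (Dual F W)) ⊆
      ({f | f ∈ (F ∙ a).dualAnnihilator} : Finset (Dual F W)) :=
    Finset.monotone_filter_right _ fun f _ hf =>
      dualAnnihilator_anti ((span_singleton_le_iff_mem a L).2 haL) hf
  have card_sdiff := Finset.card_sdiff_add_card_eq_card sub
  rw [card_filter_mem_dualAnnihilator, card_filter_mem_dualAnnihilator,
    hA.natCard_dualAnnihilator (n := 2) hL rfl,
    hA.natCard_dualAnnihilator (n := 3) (finrank_span_singleton ha₀) rfl] at card_sdiff
  have sum_point := hA.sum_sectionCard_point ha ha₀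
  have sum_line := hA.sum_sectionCard_line hL
  have card_add := hA.ncard_add
  rw [← Finset.sum_sdiff sub] at sum_point
  rw [Finset.sum_sub_distrib, Finset.sum_const, nsmul_eq_mul]
  have q_ne : (Nat.card F : ℤ) ≠ 0 := Nat.cast_ne_zero.2 Nat.card_pos.ne'
  zify at *
  refine mul_left_cancel₀ q_ne ?_
  linear_combination sum_point - (Nat.card F : ℤ) * sum_line + (Nat.card F : ℤ) ^ 3 * card_add
    - (Nat.card F : ℤ) ^ 3 * card_sdiff

lemma exists_sectionCard_add_of_line (hA : IsQuasiQuadric F A) {a : W} (ha : a ∈ A) (ha₀ : a ≠ 0)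
    {L : Submodule F W} (hL : finrank F L = 2) (haL : a ∈ L) :
    ∃ f : Dual F W, f a = 0 ∧ ¬L ≤ f.ker ∧ sectionCard A f + Nat.card F = 2 * Nat.card F ^ 2 := by
  classical
  have := Module.finite_of_finite F (M := Dual F W)
  have := Fintype.ofFinite (Dual F W)
  have one_lt : 1 < Nat.card F := Finite.one_lt_card
  have card_inter : (A ∩ L).ncard ≤ Nat.card F ^ 2 := by
    rw [← hL, ← ncard_coe_submodule]
    exact Set.ncard_le_ncard Set.inter_subset_right
  have excess_pos : 0 < Nat.card F * (Nat.card F - 1 : ℤ) *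
      (2 * Nat.card F ^ 2 - Nat.card F - (A ∩ L).ncard) := by
    zify at one_lt card_inter
    have : 0 < 2 * (Nat.card F : ℤ) ^ 2 - Nat.card F - (A ∩ L).ncard := by nlinarith
    have : 0 < (Nat.card F : ℤ) - 1 := by linarith
    positivity
  rw [← hA.sum_sectionCard_point_sdiff_line ha ha₀ hL haL] at excess_pos
  obtain ⟨f, hf, lt_section⟩ :=
    Finset.exists_lt_of_sum_lt (Finset.sum_const_zero.trans_lt excess_pos)
  simp only [Finset.mem_sdiff, Finset.mem_filter_univ] at hf
  have hLf : ¬L ≤ f.ker := fun h => hf.2 ((mem_dualAnnihilator f).2 fun w hw => h hw)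
  refine ⟨f, mem_dualAnnihilator_span_singleton.1 hf.1, hLf, ?_⟩
  refine (hA.sectionCard_eq f ?_).resolve_left fun h => ?_
  · rintro rfl
    simp at hLf
  · simp [h] at lt_section

lemma exists_line_le_ker (hA : IsQuasiQuadric F A) {a : W} (ha : a ∈ A) (ha₀ : a ≠ 0)
    {f : Dual F W} (hf₀ : f ≠ 0) (hfa : f a = 0)
    (hf : sectionCard A f + Nat.card F = 2 * Nat.card F ^ 2) :
    ∃ M : Submodule F W, finrank F M = 2 ∧ (M : Set W) ⊆ A ∧ a ∈ M ∧ M ≤ f.ker := by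
  have finrank_ker : finrank F f.ker = 3 := by
    have := Dual.finrank_ker_add_one_of_ne_zero hf₀
    have := hA.finrank_eq
    omega
  have span_sub : ((F ∙ a : Submodule F W) : Set W) ⊆ {w ∈ A | f w = 0} := fun w hw =>
    ⟨span_singleton_subset_of_smul_mem hA.smul_mem ha hw,
      (span_singleton_le_iff_mem a f.ker).2 hfa hw⟩
  have card_le : Nat.card F ^ 2 ≤ ({w ∈ A | f w = 0} \ (F ∙ a : Submodule F W)).ncard := by
    have one_lt : 1 < Nat.card F := Finite.one_lt_card
    have card_sdiff := Set.ncard_sdiff_add_ncard_of_subset span_sub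
    rw [ncard_coe_submodule, finrank_span_singleton ha₀, pow_one, ← sectionCard] at card_sdiff
    have : 2 * Nat.card F ≤ Nat.card F ^ 2 := by nlinarith
    omega
  obtain ⟨x, ⟨hxA, hfx⟩, hxa, c, hc, ⟨hxcA, -⟩⟩ :=
    exists_add_smul_mem_of_le_ncard finrank_ker ha₀ hfa (fun w hw => hw.2) card_le
  have span_eq : span F {x, c • a} = F ∙ a ⊔ F ∙ x := by
    rw [span_insert, span_singleton_smul_eq hc.isUnit, sup_comm]
  refine ⟨F ∙ a ⊔ F ∙ x, ?_, ?_, mem_sup_left (mem_span_singleton_self a), sup_le ?_ ?_⟩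
  · rw [finrank_sup_span_singleton hxa, finrank_span_singleton ha₀]
  · rw [← span_eq]
    exact hA.span_pair_subset x hxA _ (hA.smul_mem c a ha) hxcA
  · exact (span_singleton_le_iff_mem a f.ker).2 hfa
  · exact (span_singleton_le_iff_mem x f.ker).2 hfx

lemma exists_line_ne (hA : IsQuasiQuadric F A) {a : W} (ha : a ∈ A) (ha₀ : a ≠ 0)
    {L : Submodule F W} (hL : finrank F L = 2) (haL : a ∈ L) :
    ∃ M : Submodule F W, finrank F M = 2 ∧ (M : Set W) ⊆ A ∧ a ∈ M ∧ M ≠ L := by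
  obtain ⟨f, hfa, hLf, hf⟩ := hA.exists_sectionCard_add_of_line ha ha₀ hL haL
  obtain ⟨M, hM, hMA, haM, hMf⟩ := hA.exists_line_le_ker ha ha₀
    (fun h => hLf (by simp [h])) hfa hf
  exact ⟨M, hM, hMA, haM, fun hML => hLf (hML ▸ hMf)⟩

lemma section_eq_union (hA : IsQuasiQuadric F A) {L M : Submodule F W} (hL : finrank F L = 2)
    (hLA : (L : Set W) ⊆ A) (hM : finrank F M = 2) (hMA : (M : Set W) ⊆ A) (hLM : L ≠ M)
    {f : Dual F W} (hf : f ≠ 0) (hLf : L ≤ f.ker) (hMf : M ≤ f.ker) :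
    {w ∈ A | f w = 0} = (L ∪ M : Set W) := by
  have card_section := hA.sectionCard_add_of_line_le_ker hL hLA hf hLf
  have finrank_inf := finrank_inf_lt_of_ne (hL.trans hM.symm) hLM
  have card_inter : (L ∩ M : Set W).ncard ≤ Nat.card F := by
    rw [← coe_inf, ncard_coe_submodule]
    exact (Nat.pow_le_pow_right Nat.card_pos (by omega)).trans (pow_one _).le
  have card_union := Set.ncard_union_add_ncard_inter (L : Set W) M
  rw [ncard_coe_submodule, ncard_coe_submodule, hL, hM] at card_union
  refine (Set.eq_of_subset_of_ncard_le (Set.union_subset ?_ ?_) ?_).symm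
  · exact fun w hw => ⟨hLA hw, hLf hw⟩
  · exact fun w hw => ⟨hMA hw, hMf hw⟩
  · rw [sectionCard] at card_section
    omega

lemma exists_trace (hA : IsQuasiQuadric F A) {L : Submodule F W} (hL : finrank F L = 2)
    (hLA : (L : Set W) ⊆ A) {x : W} (hx : x ∈ A) (hxL : x ∉ L) :
    ∃ p ≤ L, finrank F p = 1 ∧ ∀ y ∈ L, x + y ∈ A ↔ y ∈ p := by
  have := hA.finrank_eq
  have finrank_sup : finrank F (L ⊔ F ∙ x : Submodule F W) = 3 := by
    rw [finrank_sup_span_singleton hxL, hL]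
  obtain ⟨f, hf, hle⟩ := exists_le_ker_of_lt_top (L ⊔ F ∙ x)
    (lt_top_of_finrank_lt_finrank (by omega))
  have hLf : L ≤ f.ker := le_sup_left.trans hle
  have hfx : f x = 0 := hle (mem_sup_right (mem_span_singleton_self x))
  obtain ⟨M, hM, hMA, hxM, hMf⟩ := hA.exists_line_le_ker hx
    (ne_of_mem_of_not_mem L.zero_mem hxL).symm hf hfx
    (hA.sectionCard_add_of_line_le_ker hL hLA hf hLf)
  have hLM : L ≠ M := fun h => hxL (h ▸ hxM)
  have section_eq := hA.section_eq_union hL hLA hM hMA hLM hf hLf hMf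
  refine ⟨L ⊓ M, inf_le_left, ?_, fun y hy => ?_⟩
  · have := finrank_inf_lt_of_ne (hL.trans hM.symm) hLM
    have := finrank_mono (sup_le hLf hMf)
    have := Dual.finrank_ker_add_one_of_ne_zero hf
    have := finrank_sup_add_finrank_inf_eq L M
    omega
  · have mem_section : x + y ∈ A ↔ x + y ∈ {w ∈ A | f w = 0} := by
      simp [hfx, LinearMap.mem_ker.1 (hLf hy)]
    rw [mem_section, section_eq, Set.mem_union, SetLike.mem_coe, SetLike.mem_coe,
      L.add_mem_iff_left hy, M.add_mem_iff_right hxM, mem_inf]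
    simp [hxL, hy]

end IsQuasiQuadric

/-- Four independent vectors placed in a `2 × 2` array so that the lines joining them along the
rows and the columns lie on `A`: the skew quadrilaterals formed by lines of a hyperbolic
quadric. -/
structure IsFrame (F : Type*) {W : Type*} [Field F] [AddCommGroup W] [Module F W]
    (A : Set W) (w : Matrix (Fin 2) (Fin 2) W) : Prop where
  linearIndependent : LinearIndependent F fun p : Fin 2 × Fin 2 => w p.1 p.2
  row_subset : ∀ i, (span F {w i 0, w i 1} : Set W) ⊆ A
  col_subset : ∀ j, (span F {w 0 j, w 1 j} : Set W) ⊆ A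

section Coordinates

variable {F W : Type*} [Field F] [AddCommGroup W] [Module F W] {A : Set W}

namespace IsFrame

variable {w : Matrix (Fin 2) (Fin 2) W}

lemma transpose (hw : IsFrame F A w) : IsFrame F A w.transpose where
  linearIndependent := hw.linearIndependent.comp Prod.swap Prod.swap_injective
  row_subset := hw.col_subset
  col_subset := hw.row_subset

lemma swap_cols (hw : IsFrame F A w) : IsFrame F A (w.submatrix id Fin.rev) where
  linearIndependent := hw.linearIndependent.comp (Prod.map id Fin.rev)
    (Function.injective_id.prodMap Fin.rev_injective)
  row_subset i := Set.pair_comm (w i 0) (w i 1) ▸ hw.row_subset i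
  col_subset j := hw.col_subset (Fin.rev j)

lemma eq_zero (hw : IsFrame F A w) {a b c d : F}
    (h : a • w 0 0 + b • w 0 1 + c • w 1 0 + d • w 1 1 = 0) :
    a = 0 ∧ b = 0 ∧ c = 0 ∧ d = 0 := by
  have := Fintype.linearIndependent_iff.1 hw.linearIndependent (fun p => !![a, b; c, d] p.1 p.2)
    (by simpa [Fintype.sum_prod_type, add_assoc] using h)
  exact ⟨this (0, 0), this (0, 1), this (1, 0), this (1, 1)⟩

lemma linearIndependent_row (hw : IsFrame F A w) (i : Fin 2) :
    LinearIndependent F ![w i 0, w i 1] := by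
  convert hw.linearIndependent.comp (fun j => (i, j)) (Prod.mk_right_injective i) using 1
  ext j
  fin_cases j <;> rfl

lemma eq_zero_of_row_zero_mem (hw : IsFrame F A w) {a b : F}
    (h : a • w 0 0 + b • w 0 1 ∈ span F {w 1 0, w 1 1}) : a = 0 ∧ b = 0 := by
  obtain ⟨c, d, hcd⟩ := mem_span_pair.1 h
  have := hw.eq_zero (a := a) (b := b) (c := -c) (d := -d)
    (by rw [← hcd]; module)
  exact ⟨this.1, this.2.1⟩

lemma eq_zero_of_row_one_mem (hw : IsFrame F A w) {c d : F}
    (h : c • w 1 0 + d • w 1 1 ∈ span F {w 0 0, w 0 1}) : c = 0 ∧ d = 0 := by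
  obtain ⟨a, b, hab⟩ := mem_span_pair.1 h
  have := hw.eq_zero (a := -a) (b := -b) (c := c) (d := d)
    (by rw [add_assoc, ← hab]; module)
  exact this.2.2

end IsFrame

lemma finrank_span_pair_of_linearIndependent {u v : W} (huv : LinearIndependent F ![u, v]) :
    finrank F (span F {u, v}) = 2 := by
  rw [← Matrix.range_cons_cons_empty u v ![], finrank_span_eq_card huv, Fintype.card_fin]

namespace IsQuasiQuadric

lemma smul_mem_iff (hA : IsQuasiQuadric F A) {a : F} (ha : a ≠ 0) {w : W} :
    a • w ∈ A ↔ w ∈ A :=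
  ⟨fun h => by simpa [smul_smul, ha] using hA.smul_mem a⁻¹ _ h, hA.smul_mem a w⟩

variable [Finite F] [Finite W]

lemma mem_span_singleton_of_add_mem (hA : IsQuasiQuadric F A) {L : Submodule F W}
    (hL : finrank F L = 2) (hLA : (L : Set W) ⊆ A) {x y z : W} (hx : x ∈ A) (hxL : x ∉ L)
    (hy : y ∈ L) (hy₀ : y ≠ 0) (hxy : x + y ∈ A) (hz : z ∈ L) (hxz : x + z ∈ A) :
    z ∈ F ∙ y := by
  obtain ⟨p, -, hp, mem_iff⟩ := hA.exists_trace hL hLA hx hxL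
  rw [span_singleton_eq_of_finrank_eq_one hp ((mem_iff y hy).1 hxy) hy₀]
  exact (mem_iff z hz).1 hxz

lemma exists_slope (hA : IsQuasiQuadric F A) {u v : W} (huv : LinearIndependent F ![u, v])
    (hsub : (span F {u, v} : Set W) ⊆ A) {x : W} (hx : x ∈ A) (hxL : x ∉ span F {u, v})
    (hxv : x + v ∉ A) :
    ∃ s : F, ∀ c d : F, x + (c • u + d • v) ∈ A ↔ d = c * s := by
  obtain ⟨p, hle, hp, mem_iff⟩ :=
    hA.exists_trace (finrank_span_pair_of_linearIndependent huv) hsub hx hxL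
  obtain ⟨⟨g, hg⟩, g_ne, -⟩ := finrank_eq_one_iff'.1 hp
  obtain ⟨c₀, d₀, rfl⟩ := mem_span_pair.1 (hle hg)
  have p_eq := span_singleton_eq_of_finrank_eq_one hp hg fun h => g_ne (Subtype.ext h)
  have hc₀ : c₀ ≠ 0 := by
    rintro rfl
    have hd₀ : d₀ ≠ 0 := by
      rintro rfl
      simp at g_ne
    refine hxv ((mem_iff v (mem_span_of_mem (by simp))).2 ?_)
    rwa [zero_smul, zero_add, p.smul_mem_iff hd₀] at hg
  refine ⟨d₀ / c₀, fun c d => ?_⟩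
  rw [mem_iff _ (mem_span_pair.2 ⟨c, d, rfl⟩), ← p_eq, mem_span_singleton]
  constructor
  · rintro ⟨k, hk⟩
    rw [smul_add, smul_smul, smul_smul] at hk
    obtain ⟨rfl, rfl⟩ := huv.eq_of_pair hk
    field_simp
  · rintro rfl
    exact ⟨c / c₀, by rw [smul_add, smul_smul, smul_smul]; field_simp⟩

end IsQuasiQuadric

namespace IsFrame

variable {w : Matrix (Fin 2) (Fin 2) W} [Finite F] [Finite W]

lemma add_notMem (hA : IsQuasiQuadric F A) (hw : IsFrame F A w) (t : F) :
    w 0 0 + t • w 0 1 + w 1 1 ∉ A := by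
  intro h
  have w₁₁_notMem : w 1 1 ∉ span F {w 0 0, w 0 1} := fun h₁ =>
    one_ne_zero (hw.eq_zero_of_row_one_mem (c := 0) (d := 1) (by simpa using h₁)).2
  have hmem := hA.mem_span_singleton_of_add_mem
    (finrank_span_pair_of_linearIndependent (hw.linearIndependent_row 0)) (hw.row_subset 0)
    (x := w 1 1) (y := w 0 1) (z := w 0 0 + t • w 0 1)
    (hw.row_subset 1 (mem_span_of_mem (by simp))) w₁₁_notMem
    (mem_span_of_mem (by simp)) ((hw.linearIndependent_row 0).ne_zero 1)
    (hw.col_subset 1 (mem_span_pair.2 ⟨1, 1, by module⟩))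
    (mem_span_pair.2 ⟨1, t, by rw [one_smul]⟩) (by rwa [add_comm])
  obtain ⟨k, hk⟩ := mem_span_singleton.1 hmem
  have := (hw.linearIndependent_row 0).eq_of_pair
    (s := 0) (t := k) (s' := 1) (t' := t) (by rw [zero_smul, zero_add, one_smul]; exact hk)
  exact zero_ne_one this.1

lemma exists_row_slope (hA : IsQuasiQuadric F A) (hw : IsFrame F A w) (t : F) :
    ∃ s : F, ∀ c d : F, w 0 0 + t • w 0 1 + (c • w 1 0 + d • w 1 1) ∈ A ↔ d = c * s := by
  refine hA.exists_slope (hw.linearIndependent_row 1) (hw.row_subset 1)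
    (hw.row_subset 0 (mem_span_pair.2 ⟨1, t, by rw [one_smul]⟩)) (fun h => ?_) (hw.add_notMem hA t)
  rw [← one_smul F (w 0 0)] at h
  exact one_ne_zero (hw.eq_zero_of_row_zero_mem h).1

lemma mem_iff_of_left_eq_zero (hA : IsQuasiQuadric F A) (hw : IsFrame F A w) (b c d : F) :
    b • w 0 1 + (c • w 1 0 + d • w 1 1) ∈ A ↔ b * c = 0 := by
  rw [mul_eq_zero]
  constructor
  · intro h
    by_contra! hbc
    have notMem : b • w 0 1 ∉ span F {w 1 0, w 1 1} := fun h₁ =>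
      hbc.1 (hw.eq_zero_of_row_zero_mem (a := 0) (by simpa using h₁)).2
    have hmem := hA.mem_span_singleton_of_add_mem
      (finrank_span_pair_of_linearIndependent (hw.linearIndependent_row 1)) (hw.row_subset 1)
      (x := b • w 0 1) (y := w 1 1) (z := c • w 1 0 + d • w 1 1)
      (hw.row_subset 0 (mem_span_pair.2 ⟨0, b, by module⟩)) notMem
      (mem_span_of_mem (by simp)) ((hw.linearIndependent_row 1).ne_zero 1)
      (hw.col_subset 1 (mem_span_pair.2 ⟨b, 1, by module⟩))
      (mem_span_pair.2 ⟨c, d, rfl⟩) h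
    obtain ⟨k, hk⟩ := mem_span_singleton.1 hmem
    have := (hw.linearIndependent_row 1).eq_of_pair
      (s := 0) (t := k) (s' := c) (t' := d) (by rw [zero_smul, zero_add]; exact hk)
    exact hbc.2 this.1.symm
  · rintro (rfl | rfl)
    · exact hw.row_subset 1 (mem_span_pair.2 ⟨c, d, by module⟩)
    · exact hw.col_subset 1 (mem_span_pair.2 ⟨b, d, by module⟩)

lemma exists_mem_iff (hA : IsQuasiQuadric F A) (hw : IsFrame F A w) :
    ∃ κ : F, κ ≠ 0 ∧ ∀ a b c d : F,
      a • w 0 0 + b • w 0 1 + (c • w 1 0 + d • w 1 1) ∈ A ↔ a * d = κ * (b * c) := by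
  choose s hs using hw.exists_row_slope hA
  choose s' hs' using hw.transpose.exists_row_slope hA
  have slope_comm (t u : F) : u * s t = t * s' u := by
    refine (hs' u t (u * s t)).1 ?_
    convert (hs t u (u * s t)).2 rfl using 1
    simp only [Matrix.transpose_apply]
    abel
  have slope_eq (t : F) : s t = t * s 1 := by
    rw [← one_mul (s t), slope_comm, ← one_mul (s 1), slope_comm 1 1, one_mul]
  have slope_one_ne : s 1 ≠ 0 := by
    intro h
    refine hw.swap_cols.add_notMem hA 1 ?_
    have := (hs 1 1 0).2 (by rw [h, mul_zero])
    simpa [add_comm (w 0 1)] using this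
  refine ⟨s 1, slope_one_ne, fun a b c d => ?_⟩
  by_cases ha : a = 0
  · have := hw.mem_iff_of_left_eq_zero hA b c d
    simpa [ha, slope_one_ne, eq_comm (a := (0 : F))] using this
  · have scale : a • w 0 0 + b • w 0 1 + (c • w 1 0 + d • w 1 1)
        = a • (w 0 0 + (b / a) • w 0 1 + ((c / a) • w 1 0 + (d / a) • w 1 1)) := by
      simp only [smul_add, smul_smul, mul_div_cancel₀ _ ha]
    rw [scale, hA.smul_mem_iff ha, hs, slope_eq]
    field_simp

end IsFrame
end Coordinates

lemma inf_eq_span_singleton_of_finrank_eq_two {F W : Type*} [Field F] [AddCommGroup W] [Module F W]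
    {L M : Submodule F W} (hL : finrank F L = 2) (hM : finrank F M = 2) (hLM : L ≠ M) {a : W}
    (ha₀ : a ≠ 0) (haL : a ∈ L) (haM : a ∈ M) : L ⊓ M = F ∙ a := by
  have : FiniteDimensional F L := finite_of_finrank_eq_succ hL
  have : FiniteDimensional F M := finite_of_finrank_eq_succ hM
  have h_lt := finrank_inf_lt_of_ne (hL.trans hM.symm) hLM
  have hle : F ∙ a ≤ L ⊓ M := (span_singleton_le_iff_mem a _).2 ⟨haL, haM⟩
  refine (eq_of_le_of_finrank_le hle ?_).symm
  rw [finrank_span_singleton ha₀]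
  omega

lemma linearIndependent_prod_fin_two {F W : Type*} [Field F] [AddCommGroup W] [Module F W]
    {w : Matrix (Fin 2) (Fin 2) W} (h₀ : LinearIndependent F ![w 0 0, w 1 0])
    (h₁ : LinearIndependent F ![w 0 1, w 1 1])
    (hdisj : Disjoint (span F {w 0 0, w 1 0}) (span F {w 0 1, w 1 1})) :
    LinearIndependent F fun p : Fin 2 × Fin 2 => w p.1 p.2 := by
  refine Fintype.linearIndependent_iff.2 fun c hc => ?_
  rw [Fintype.sum_prod_type_right, Fin.sum_univ_two, Fin.sum_univ_two, Fin.sum_univ_two] at hc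
  have mem₀ : c (0, 0) • w 0 0 + c (1, 0) • w 1 0 ∈ span F {w 0 0, w 1 0} :=
    mem_span_pair.2 ⟨_, _, rfl⟩
  have mem₁ : c (0, 1) • w 0 1 + c (1, 1) • w 1 1 ∈ span F {w 0 1, w 1 1} :=
    mem_span_pair.2 ⟨_, _, rfl⟩
  have h := disjoint_def.1 hdisj _ mem₀ (by rw [eq_neg_of_add_eq_zero_left hc]; exact neg_mem mem₁)
  rw [h, zero_add] at hc
  obtain ⟨h₀₀, h₁₀⟩ := LinearIndependent.pair_iff.1 h₀ _ _ h
  obtain ⟨h₀₁, h₁₁⟩ := LinearIndependent.pair_iff.1 h₁ _ _ hc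
  rintro ⟨i, j⟩
  fin_cases i <;> fin_cases j <;> assumption

namespace IsQuasiQuadric

variable {F W : Type*} [Field F] [AddCommGroup W] [Module F W] {A : Set W} [Finite F] [Finite W]

lemma exists_ne_zero_mem (hA : IsQuasiQuadric F A) : ∃ a ∈ A, a ≠ 0 := by
  have one_lt : 1 < Nat.card F := Finite.one_lt_card
  have card_add := hA.ncard_add
  have : Nat.card F ≤ Nat.card F ^ 3 := Nat.le_self_pow three_ne_zero _
  have : 1 < Nat.card F ^ 2 := Nat.one_lt_pow two_ne_zero one_lt
  exact Set.exists_ne_of_one_lt_ncard (by omega) 0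

lemma exists_line (hA : IsQuasiQuadric F A) {a : W} (ha : a ∈ A) (ha₀ : a ≠ 0) :
    ∃ L : Submodule F W, finrank F L = 2 ∧ (L : Set W) ⊆ A ∧ a ∈ L := by
  obtain ⟨b, hb⟩ : ∃ b, b ∉ F ∙ a := by
    have := hA.finrank_eq
    refine SetLike.exists_not_mem_of_ne_top _ (lt_top_of_finrank_lt_finrank ?_).ne rfl
    rw [finrank_span_singleton ha₀]
    omega
  obtain ⟨L, hL, hLA, haL, -⟩ := hA.exists_line_ne ha ha₀ (L := F ∙ a ⊔ F ∙ b)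
    (by rw [finrank_sup_span_singleton hb, finrank_span_singleton ha₀])
    (mem_sup_left (mem_span_singleton_self a))
  exact ⟨L, hL, hLA, haL⟩

lemma disjoint_lines (hA : IsQuasiQuadric F A) {L M N : Submodule F W} (hL : finrank F L = 2)
    (hLA : (L : Set W) ⊆ A) (hM : finrank F M = 2) (hMA : (M : Set W) ⊆ A) (hML : M ≠ L)
    (hN : finrank F N = 2) (hNA : (N : Set W) ⊆ A) (hNL : N ≠ L) {u v : W} (hu₀ : u ≠ 0)
    (huM : u ∈ M) (huL : u ∈ L) (hvN : v ∈ N) (hvL : v ∈ L) (hvu : v ∉ F ∙ u) :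
    Disjoint M N := by
  have hv₀ : v ≠ 0 := by
    rintro rfl
    exact hvu (F ∙ u).zero_mem
  have inf_M := inf_eq_span_singleton_of_finrank_eq_two hM hL hML hu₀ huM huL
  have inf_N := inf_eq_span_singleton_of_finrank_eq_two hN hL hNL hv₀ hvN hvL
  rw [disjoint_def]
  intro x hxM hxN
  have hxL : x ∈ L := by
    by_contra hxL
    exact hvu (hA.mem_span_singleton_of_add_mem hL hLA (hMA hxM) hxL huL hu₀
      (hMA (M.add_mem hxM huM)) hvL (hNA (N.add_mem hxN hvN)))
  obtain ⟨c, rfl⟩ := mem_span_singleton.1 (inf_N ▸ ⟨hxN, hxL⟩ : x ∈ F ∙ v)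
  have hcv : c • v ∈ F ∙ u := inf_M ▸ ⟨hxM, hxL⟩
  by_contra hcv₀
  exact hvu (((F ∙ u).smul_mem_iff fun hc => hcv₀ (by rw [hc, zero_smul])).1 hcv)

lemma exists_skew_lines (hA : IsQuasiQuadric F A) :
    ∃ (u v : W) (M N : Submodule F W), finrank F M = 2 ∧ (M : Set W) ⊆ A ∧ finrank F N = 2 ∧
      (N : Set W) ⊆ A ∧ Disjoint M N ∧ u ∈ M ∧ u ≠ 0 ∧ v ∈ N ∧ v ≠ 0 ∧
      (span F {u, v} : Set W) ⊆ A := by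
  obtain ⟨u, huA, hu₀⟩ := hA.exists_ne_zero_mem
  obtain ⟨L, hL, hLA, huL⟩ := hA.exists_line huA hu₀
  obtain ⟨M, hM, hMA, huM, hML⟩ := hA.exists_line_ne huA hu₀ hL huL
  obtain ⟨v, hvL, hvu⟩ : ∃ v ∈ L, v ∉ F ∙ u := by
    refine SetLike.not_le_iff_exists.1 fun hle => ?_
    have := finrank_mono hle
    rw [finrank_span_singleton hu₀, hL] at this
    omega
  have hv₀ := (ne_of_mem_of_not_mem (F ∙ u).zero_mem hvu).symm
  obtain ⟨N, hN, hNA, hvN, hNL⟩ := hA.exists_line_ne (hLA hvL) hv₀ hL hvL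
  exact ⟨u, v, M, N, hM, hMA, hN, hNA,
    hA.disjoint_lines hL hLA hM hMA hML hN hNA hNL hu₀ huM huL hvN hvL hvu, huM, hu₀, hvN, hv₀,
    Set.Subset.trans (span_le.2 (Set.pair_subset huL hvL)) hLA⟩

lemma exists_transversal (hA : IsQuasiQuadric F A) {M N : Submodule F W} (hM : finrank F M = 2)
    (hMA : (M : Set W) ⊆ A) (hN : finrank F N = 2) (hNA : (N : Set W) ⊆ A) (hMN : Disjoint M N)
    {u v : W} (huM : u ∈ M) (hu₀ : u ≠ 0) (hvN : v ∈ N) (hv₀ : v ≠ 0) (huv : u + v ∈ A) :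
    ∃ x ∈ M, ∃ y ∈ N, x ∉ F ∙ u ∧ y ∉ F ∙ v ∧ (span F {x, y} : Set W) ⊆ A := by
  obtain ⟨x, hxM, hxu⟩ : ∃ x ∈ M, x ∉ F ∙ u := by
    refine SetLike.not_le_iff_exists.1 fun hle => ?_
    have := finrank_mono hle
    rw [finrank_span_singleton hu₀, hM] at this
    omega
  have hx₀ := (ne_of_mem_of_not_mem (F ∙ u).zero_mem hxu).symm
  have hxN : x ∉ N := fun h => hx₀ (disjoint_def.1 hMN x hxM h)
  obtain ⟨p, hpN, hp, mem_iff⟩ := hA.exists_trace hN hNA (hMA hxM) hxN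
  obtain ⟨⟨y, hyp⟩, hy₀, -⟩ := finrank_eq_one_iff'.1 hp
  have hxy : x + y ∈ A := (mem_iff y (hpN hyp)).2 hyp
  refine ⟨x, hxM, y, hpN hyp, hxu, fun hyv => ?_,
    hA.span_pair_subset x (hMA hxM) y (hNA (hpN hyp)) hxy⟩
  have p_eq : F ∙ v = p := by
    rw [← span_singleton_eq_of_finrank_eq_one hp hyp fun h => hy₀ (Subtype.ext h)]
    obtain ⟨c, rfl⟩ := mem_span_singleton.1 hyv
    have hc : c ≠ 0 := by
      rintro rfl
      simp at hy₀
    exact (span_singleton_smul_eq hc.isUnit v).symm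
  have hxv : x + v ∈ A := (mem_iff v hvN).2 (p_eq ▸ mem_span_singleton_self v)
  have hvM : v ∉ M := fun h => hv₀ (disjoint_def.1 hMN v h hvN)
  refine hxu (hA.mem_span_singleton_of_add_mem hM hMA (hNA hvN) hvM huM hu₀ ?_ hxM ?_)
  · rwa [add_comm]
  · rwa [add_comm]

lemma exists_isFrame (hA : IsQuasiQuadric F A) : ∃ w, IsFrame F A w := by
  obtain ⟨u, v, M, N, hM, hMA, hN, hNA, hMN, huM, hu₀, hvN, hv₀, hsub⟩ := hA.exists_skew_lines
  have huv : u + v ∈ A := hsub (add_mem (mem_span_of_mem (by simp)) (mem_span_of_mem (by simp)))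
  obtain ⟨x, hxM, y, hyN, hxu, hyv, hsub'⟩ :=
    hA.exists_transversal hM hMA hN hNA hMN huM hu₀ hvN hv₀ huv
  refine ⟨!![u, v; x, y], ⟨linearIndependent_prod_fin_two ?_ ?_ ?_, ?_, ?_⟩⟩
  · exact (LinearIndependent.pair_iff' hu₀).2 fun c hc => hxu (mem_span_singleton.2 ⟨c, hc⟩)
  · exact (LinearIndependent.pair_iff' hv₀).2 fun c hc => hyv (mem_span_singleton.2 ⟨c, hc⟩)
  · exact hMN.mono (span_le.2 (Set.pair_subset huM hxM)) (span_le.2 (Set.pair_subset hvN hyN))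
  · exact Fin.forall_fin_two.2 ⟨hsub, hsub'⟩
  · exact Fin.forall_fin_two.2 ⟨Set.Subset.trans (span_le.2 (Set.pair_subset huM hxM)) hMA,
      Set.Subset.trans (span_le.2 (Set.pair_subset hvN hyN)) hNA⟩

lemma exists_linearEquiv_det (hA : IsQuasiQuadric F A) :
    ∃ e : W ≃ₗ[F] Matrix (Fin 2) (Fin 2) F, ∀ x, x ∈ A ↔ (e x).det = 0 := by
  obtain ⟨w, hw⟩ := hA.exists_isFrame
  obtain ⟨κ, hκ, mem_iff⟩ := hw.exists_mem_iff hA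
  let entry (i j : Fin 2) : Matrix (Fin 2) (Fin 2) F →ₗ[F] F := Matrix.entryLinearMap F F i j
  let f : Matrix (Fin 2) (Fin 2) F →ₗ[F] W :=
    (entry 0 0).smulRight (w 0 0) + (κ⁻¹ • entry 0 1).smulRight (w 0 1)
      + ((entry 1 0).smulRight (w 1 0) + (entry 1 1).smulRight (w 1 1))
  have f_apply (M) : f M = M 0 0 • w 0 0 + (κ⁻¹ * M 0 1) • w 0 1
      + (M 1 0 • w 1 0 + M 1 1 • w 1 1) := rfl
  have f_injective : Function.Injective f := by
    refine (injective_iff_map_eq_zero f).2 fun M hM => ?_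
    obtain ⟨h₀₀, h₀₁, h₁₀, h₁₁⟩ := hw.eq_zero (by rwa [add_assoc, ← f_apply])
    have h₀₁' : M 0 1 = 0 := by simpa [hκ] using h₀₁
    ext i j
    fin_cases i <;> fin_cases j <;> assumption
  have := finite_of_finrank_eq_succ hA.finrank_eq
  let e := f.linearEquivOfInjective f_injective (by simp [hA.finrank_eq, finrank_matrix])
  refine ⟨e.symm, fun x => ?_⟩
  obtain ⟨M, rfl⟩ := e.surjective x
  rw [e.symm_apply_apply, Matrix.det_fin_two, sub_eq_zero]
  change f M ∈ A ↔ _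
  rw [f_apply, mem_iff, mul_assoc, mul_inv_cancel_left₀ hκ]

end IsQuasiQuadric

section DeterminantForm

open Matrix

variable {F : Type*} [Field F]

/-- The determinant of `2 × 2` matrices as a quadratic form in the four entries, the model of a
hyperbolic quadratic form. -/
def detForm (R : Type*) [CommRing R] : QuadraticForm R (Matrix (Fin 2) (Fin 2) R) :=
  QuadraticMap.linMulLin (entryLinearMap R R 0 0) (entryLinearMap R R 1 1)
    - QuadraticMap.linMulLin (entryLinearMap R R 0 1) (entryLinearMap R R 1 0)

lemma detForm_apply {R : Type*} [CommRing R] (M : Matrix (Fin 2) (Fin 2) R) :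
    detForm R M = M.det :=
  (det_fin_two M).symm

lemma eq_zero_of_polar_detForm_eq_zero {R : Type*} [CommRing R] {M : Matrix (Fin 2) (Fin 2) R}
    (h : ∀ N, detForm R (M + N) - detForm R M - detForm R N = 0) : M = 0 := by
  have polar_eq (N : Matrix (Fin 2) (Fin 2) R) :
      detForm R (M + N) - detForm R M - detForm R N
        = M 0 0 * N 1 1 + M 1 1 * N 0 0 - M 0 1 * N 1 0 - M 1 0 * N 0 1 := by
    simp only [detForm_apply, det_fin_two, Matrix.add_apply]
    ring
  simp only [polar_eq] at h
  ext i j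
  fin_cases i <;> fin_cases j
  · simpa using h !![0, 0; 0, 1]
  · simpa using h !![0, 0; 1, 0]
  · simpa using h !![0, 1; 0, 0]
  · simpa using h !![1, 0; 0, 0]

lemma vecMulVec_right_injective {u : Fin 2 → F} (hu : u ≠ 0) :
    Function.Injective (vecMulVec u : (Fin 2 → F) → Matrix (Fin 2) (Fin 2) F) := by
  obtain ⟨i, hi⟩ := Function.ne_iff.1 hu
  intro x y h
  ext j
  exact mul_left_cancel₀ hi (congrFun₂ h i j)

variable (F) in
lemma exists_finrank_eq_two_detForm_eq_zero :
    ∃ U : Submodule F (Matrix (Fin 2) (Fin 2) F), finrank F U = 2 ∧ ∀ M ∈ U, detForm F M = 0 := by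
  refine ⟨(vecMulVecBilin F F (Pi.single (0 : Fin 2) (1 : F))).range, ?_, ?_⟩
  · rw [LinearMap.finrank_range_of_inj, finrank_fin_fun]
    exact vecMulVec_right_injective (by simp)
  · rintro _ ⟨x, rfl⟩
    rw [detForm_apply]
    exact det_vecMulVec _ x

lemma range_vecMulVec_subset {M : Matrix (Fin 2) (Fin 2) F} {u : Fin 2 → F} (hu : M *ᵥ u = 0) :
    Set.range (vecMulVec u) ⊆ {X : Matrix (Fin 2) (Fin 2) F | X.det = 0 ∧ (M * X).trace = 0} := by
  rintro _ ⟨x, rfl⟩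
  simp [mul_vecMulVec, hu, det_vecMulVec]

lemma ncard_det_trace_eq_zero :
    {X : Matrix (Fin 2) (Fin 2) F | X.det = 0 ∧ X.trace = 0}.ncard = Nat.card F ^ 2 := by
  classical
  let nilpotent (p : F × F) : Matrix (Fin 2) (Fin 2) F :=
    if p.2 = 0 then !![0, 0; p.1, 0] else !![p.1, p.2; -(p.1 ^ 2 / p.2), -p.1]
  let parameters (X : Matrix (Fin 2) (Fin 2) F) : F × F :=
    (if X 0 1 = 0 then X 1 0 else X 0 0, X 0 1)
  have left_inverse : Function.LeftInverse parameters nilpotent := by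
    rintro ⟨s, t⟩
    by_cases ht : t = 0 <;> simp [nilpotent, parameters, ht]
  have range_eq : Set.range nilpotent = {X | X.det = 0 ∧ X.trace = 0} := by
    ext X
    constructor
    · rintro ⟨⟨s, t⟩, rfl⟩
      by_cases ht : t = 0
      · simp [nilpotent, ht]
      · have : s * -s - t * -(s ^ 2 / t) = 0 := by
          field_simp
          ring
        simpa [nilpotent, ht, det_fin_two] using this
    · rintro ⟨hdet, htrace⟩
      rw [det_fin_two] at hdet
      rw [trace_fin_two] at htrace
      have h₁₁ := eq_neg_of_add_eq_zero_right htrace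
      by_cases h : X 0 1 = 0
      · have h₀₀ : X 0 0 = 0 := by simpa [h, h₁₁] using hdet
        exact ⟨(X 1 0, 0), by ext i j; fin_cases i <;> fin_cases j <;> simp [nilpotent, *]⟩
      · refine ⟨(X 0 0, X 0 1), ?_⟩
        have h₁₀ : X 1 0 = -(X 0 0 ^ 2 / X 0 1) := by
          field_simp
          linear_combination -hdet + X 0 0 * htrace
        ext i j; fin_cases i <;> fin_cases j <;> simp [nilpotent, *]
  rw [← range_eq, ← Set.image_univ, Set.ncard_image_of_injective _ left_inverse.injective,
    Set.ncard_univ, Nat.card_prod, sq]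

lemma ncard_det_trace_mul_eq_zero_iff [Finite F] {M : Matrix (Fin 2) (Fin 2) F} (hM : M ≠ 0) :
    {X : Matrix (Fin 2) (Fin 2) F | X.det = 0 ∧ (M * X).trace = 0}.ncard = Nat.card F ^ 2 ↔
      M.det ≠ 0 := by
  constructor
  · intro hcard hdet
    obtain ⟨u, hu₀, hu⟩ := exists_mulVec_eq_zero_iff.2 hdet
    obtain ⟨v, hv₀, hv⟩ := exists_vecMul_eq_zero_iff.2 hdet
    obtain ⟨y, hy⟩ : ∃ y, M *ᵥ y ≠ 0 := by
      by_contra! h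
      exact hM (mulVec_injective (funext fun y => by rw [h y, zero_mulVec]))
    have range_eq := Set.eq_of_subset_of_ncard_le (range_vecMulVec_subset hu) (by
      rw [hcard, ← Set.image_univ, Set.ncard_image_of_injective _ (vecMulVec_right_injective hu₀),
        Set.ncard_univ, Nat.card_fun, Nat.card_fin])
    obtain ⟨x, hx⟩ : vecMulVec y v ∈ Set.range (vecMulVec u) := by
      rw [range_eq, Set.mem_ofPred_eq, trace_mul_comm, vecMulVec_mul, hv]
      simp [det_vecMulVec]
    refine hy ((vecMulVec_eq_zero.1 ?_).resolve_right hv₀)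
    rw [← mul_vecMulVec, ← hx, mul_vecMulVec, hu, zero_vecMulVec]
  · intro hdet
    have hM : IsUnit M := (isUnit_iff_isUnit_det M).2 hdet.isUnit
    rw [← ncard_det_trace_eq_zero]
    refine Set.ncard_congr (fun X _ => M * X) ?_ ?_ ?_
    · rintro X ⟨hX, htrace⟩
      exact ⟨by rw [det_mul, hX, mul_zero], htrace⟩
    · exact fun X Y _ _ h => hM.mul_left_cancel h
    · rintro Y ⟨hY, htrace⟩
      have cancel := mul_nonsing_inv_cancel_left M Y hdet.isUnit
      exact ⟨M⁻¹ * Y, ⟨by rw [det_mul, hY, mul_zero], by rwa [cancel]⟩, cancel⟩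

end DeterminantForm

section PlaneFamily

variable {F V : Type*} [Field F] [AddCommGroup V] [Module F V]

/-- The equations of the hyperplanes outside a family `S`: these hyperplanes as a cone of vectors
of the dual space, the zero functional being included as soon as `⊤ ∉ S`. -/
def dualCone (S : Set (Submodule F V)) : Set (Dual F V) :=
  {f | f.ker ∉ S}

variable {S : Set (Submodule F V)}

lemma zero_mem_dualCone (hS : ∀ π ∈ S, finrank F π + 1 = finrank F V) :
    (0 : Dual F V) ∈ dualCone S := fun h => by
  have := hS _ h
  rw [LinearMap.ker_zero, finrank_top] at this
  omega

lemma smul_mem_dualCone (hS : ∀ π ∈ S, finrank F π + 1 = finrank F V) (a : F) {f : Dual F V}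
    (hf : f ∈ dualCone S) : a • f ∈ dualCone S := by
  by_cases ha : a = 0
  · rw [ha, zero_smul]
    exact zero_mem_dualCone hS
  · rwa [dualCone, Set.mem_ofPred_eq, LinearMap.ker_smul f a ha]

variable [FiniteDimensional F V]

lemma ncard_ker_eq {π : Submodule F V} (hπ : finrank F π + 1 = finrank F V) :
    {f : Dual F V | f.ker = π}.ncard = Nat.card F - 1 := by
  have : {f : Dual F V | f.ker = π} = (π.dualAnnihilator : Set (Dual F V)) \ {0} := by
    ext f
    simp only [Set.mem_ofPred_eq, Set.mem_sdiff, SetLike.mem_coe, Set.mem_singleton_iff,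
      mem_dualAnnihilator]
    constructor
    · rintro rfl
      refine ⟨fun v hv => hv, fun h => ?_⟩
      rw [LinearMap.ker_eq_top.2 h, finrank_top] at hπ
      omega
    · rintro ⟨hf, hf₀⟩
      have := Dual.finrank_ker_add_one_of_ne_zero hf₀
      exact (eq_of_le_of_finrank_eq hf (by omega)).symm
  have finrank_annihilator := Subspace.finrank_add_finrank_dualAnnihilator_eq π
  rw [this, Set.ncard_sdiff_singleton_of_mem (zero_mem _), ncard_coe_submodule,
    show finrank F π.dualAnnihilator = 1 by omega, pow_one]

variable [Finite F]

lemma mul_ncard_add_ncard_dualCone_inter (hS : ∀ π ∈ S, finrank F π + 1 = finrank F V)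
    (U : Submodule F V) :
    (Nat.card F - 1) * {π ∈ S | U ≤ π}.ncard
        + (dualCone S ∩ U.dualAnnihilator : Set (Dual F V)).ncard
      = Nat.card F ^ finrank F U.dualAnnihilator := by
  have := Module.finite_of_finite F (M := V)
  have := Module.finite_of_finite F (M := Dual F V)
  have ncard_outside : ((U.dualAnnihilator : Set (Dual F V)) \ dualCone S).ncard
      = (Nat.card F - 1) * {π ∈ S | U ≤ π}.ncard := by
    refine ncard_eq_mul_ncard_of_fiber (f := LinearMap.ker) (Set.toFinite _) ?_ ?_
    · rintro f ⟨hfU, hfS⟩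
      exact ⟨not_not.1 hfS, (mem_dualAnnihilator f).1 hfU⟩
    · rintro π ⟨hπS, hUπ⟩
      rw [← ncard_ker_eq (hS π hπS)]
      congr 1
      ext f
      constructor
      · exact And.right
      · rintro rfl
        exact ⟨⟨(mem_dualAnnihilator f).2 fun v hv => hUπ hv, not_not.2 hπS⟩, rfl⟩
  rw [← ncard_outside, Set.inter_comm, add_comm, Set.ncard_inter_add_ncard_sdiff_eq_ncard,
    ncard_coe_submodule]

lemma span_pair_subset_dualCone (hS : ∀ π ∈ S, finrank F π + 1 = finrank F V)
    (hlines : ∀ U : Submodule F V, finrank F U + 2 = finrank F V → (∃ π ∈ S, U ≤ π) →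
      Nat.card F - 1 ≤ {π ∈ S | U ≤ π}.ncard)
    {f g : Dual F V} (hf : f ∈ dualCone S) (hg : g ∈ dualCone S) (hadd : f + g ∈ dualCone S) :
    (span F {f, g} : Set (Dual F V)) ⊆ dualCone S := by
  have := Module.finite_of_finite F (M := Dual F V)
  refine span_pair_subset_of_ncard_inter_lt (zero_mem_dualCone hS) ?_ hf hg hadd
    fun hfg hsub => ?_
  · exact fun a f => smul_mem_dualCone hS a
  obtain ⟨h, h_mem, h_notMem⟩ := Set.not_subset.1 hsub
  let U := (span F {f, g}).dualCoannihilator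
  have annihilator_U : U.dualAnnihilator = span F {f, g} :=
    Subspace.dualCoannihilator_dualAnnihilator_eq
  have finrank_span := finrank_span_pair_of_linearIndependent hfg
  have finrank_U := Subspace.finrank_add_finrank_dualAnnihilator_eq U
  have count := mul_ncard_add_ncard_dualCone_inter hS U
  rw [annihilator_U, finrank_span] at finrank_U count
  have many_planes := hlines U finrank_U ⟨h.ker, not_not.1 h_notMem, fun v hv =>
    (mem_dualCoannihilator v).1 hv h h_mem⟩
  have one_lt : 1 < Nat.card F := Finite.one_lt_card
  have := Nat.mul_le_mul_left (Nat.card F - 1) many_planes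
  zify [one_lt.le] at this count one_lt ⊢
  linarith

lemma mul_ncard_add_sectionCard_dualCone (hS : ∀ π ∈ S, finrank F π + 1 = finrank F V) (v : V) :
    (Nat.card F - 1) * {π ∈ S | F ∙ v ≤ π}.ncard + sectionCard (dualCone S) (evalEquiv F V v)
      = Nat.card F ^ finrank F (F ∙ v).dualAnnihilator := by
  rw [← mul_ncard_add_ncard_dualCone_inter hS, sectionCard]
  congr 2
  ext f
  simp

lemma isQuasiQuadric_dualCone (hV : finrank F V = 4) (hS : ∀ π ∈ S, finrank F π = 3)
    (hpoints : ∀ p : Submodule F V, finrank F p = 1 →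
      {π ∈ S | p ≤ π}.ncard = Nat.card F ^ 2 - Nat.card F ∨
        {π ∈ S | p ≤ π}.ncard = Nat.card F ^ 2)
    (hlines : ∀ L : Submodule F V, finrank F L = 2 → (∃ π ∈ S, L ≤ π) →
      Nat.card F - 1 ≤ {π ∈ S | L ≤ π}.ncard) :
    IsQuasiQuadric F (dualCone S) where
  finrank_eq := by rw [Subspace.dual_finrank_eq, hV]
  zero_mem := zero_mem_dualCone fun π hπ => by rw [hS π hπ, hV]
  smul_mem a f := smul_mem_dualCone (fun π hπ => by rw [hS π hπ, hV]) a
  sectionCard_eq := by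
    intro x hx
    obtain ⟨v, rfl⟩ := (evalEquiv F V).surjective x
    have hv₀ : v ≠ 0 := by
      rintro rfl
      simp at hx
    have count := mul_ncard_add_sectionCard_dualCone (fun π hπ => by rw [hS π hπ, hV]) v
    have finrank_annihilator := Subspace.finrank_add_finrank_dualAnnihilator_eq (F ∙ v)
    rw [finrank_span_singleton hv₀, hV] at finrank_annihilator
    rw [show finrank F (F ∙ v).dualAnnihilator = 3 by omega] at count
    have one_lt : 1 < Nat.card F := Finite.one_lt_card
    have h_le : Nat.card F ≤ Nat.card F ^ 2 := Nat.le_self_pow two_ne_zero _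
    rcases hpoints _ (finrank_span_singleton hv₀) with h | h <;> rw [h] at count <;>
      zify [one_lt.le, h_le] at count ⊢
    · right
      linear_combination count
    · left
      linear_combination count
  span_pair_subset f hf g hg hadd :=
    span_pair_subset_dualCone (fun π hπ => by rw [hS π hπ, hV])
      (fun L hL => hlines L (by omega)) hf hg hadd

end PlaneFamily

section TraceDuality

open Matrix

variable {F V : Type*} [Field F] [AddCommGroup V] [Module F V]

lemma exists_linearEquiv_apply_eq_trace_mul [FiniteDimensional F V] {n : Type*} [Fintype n]
    (e : Dual F V ≃ₗ[F] Matrix n n F) :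
    ∃ g : V ≃ₗ[F] Matrix n n F, ∀ f v, f v = (e f * g v).trace := by
  classical
  let traceForm : Matrix n n F →ₗ[F] Dual F (Matrix n n F) :=
    (LinearMap.mul F (Matrix n n F)).compr₂ (traceLinearMap n F F)
  have injective : Function.Injective traceForm := fun X Y h =>
    ext_iff_trace_mul_right.2 fun M => LinearMap.congr_fun h M
  let traceEquiv := traceForm.linearEquivOfInjective injective Subspace.dual_finrank_eq.symm
  refine ⟨(evalEquiv F V).trans (e.symm.dualMap.trans traceEquiv.symm), fun f v => ?_⟩
  have dual_eq := LinearMap.congr_fun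
    (traceEquiv.apply_symm_apply (e.symm.dualMap (evalEquiv F V v))) (e f)
  calc f v = e.symm.dualMap (evalEquiv F V v) (e f) := by simp
    _ = (traceEquiv.symm (e.symm.dualMap (evalEquiv F V v)) * e f).trace := dual_eq.symm
    _ = _ := trace_mul_comm _ _

lemma exists_ker_eq_of_finrank_add_one_eq [FiniteDimensional F V] {π : Submodule F V}
    (hπ : finrank F π + 1 = finrank F V) : ∃ f : Dual F V, f ≠ 0 ∧ f.ker = π := by
  obtain ⟨f, hf₀, hle⟩ := exists_le_ker_of_lt_top π (lt_top_of_finrank_lt_finrank (by omega))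
  have finrank_ker := Dual.finrank_ker_add_one_of_ne_zero hf₀
  exact ⟨f, hf₀, (eq_of_le_of_finrank_eq hle (by omega)).symm⟩

lemma ncard_points_ker_det_eq_zero_iff [Finite F] {e : Dual F V ≃ₗ[F] Matrix (Fin 2) (Fin 2) F}
    {g : V ≃ₗ[F] Matrix (Fin 2) (Fin 2) F} (heg : ∀ f v, f v = (e f * g v).trace)
    {f : Dual F V} (hf : f ≠ 0) :
    {p : Submodule F V | finrank F p = 1 ∧ p ≤ f.ker ∧ ∀ v ∈ p, (g v).det = 0}.ncard
        = Nat.card F + 1 ↔ (e f).det ≠ 0 := by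
  have : Finite V := Finite.of_equiv _ g.symm.toEquiv
  let C : Set V := {v | f v = 0 ∧ (g v).det = 0}
  have ncard_C : C.ncard = {X | X.det = 0 ∧ (e f * X).trace = 0}.ncard := by
    rw [← Set.ncard_image_of_injective C g.injective]
    congr 1
    ext X
    obtain ⟨v, rfl⟩ := g.surjective X
    simp [C, heg, and_comm]
  have points_eq : {p : Submodule F V | finrank F p = 1 ∧ p ≤ f.ker ∧ ∀ v ∈ p, (g v).det = 0}
      = pointsIn F C := by
    ext p
    exact and_congr_right fun _ => forall₂_and.symm
  have count := ncard_pointsIn (F := F) (C := C) (by simp [C]) (by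
    rintro a v ⟨hf, hg⟩
    simp [C, hf, hg])
  have one_lt : 1 < Nat.card F := Finite.one_lt_card
  rw [points_eq, ← ncard_det_trace_mul_eq_zero_iff (e.map_ne_zero_iff.2 hf), ← ncard_C, ← count,
    ← Nat.mul_right_inj (Nat.sub_pos_of_lt one_lt).ne', ← Nat.add_right_cancel_iff (n := 1)]
  zify [one_lt.le]
  rw [show ((Nat.card F : ℤ) - 1) * (Nat.card F + 1) + 1 = Nat.card F ^ 2 by ring]

lemma mem_iff_ncard_points_det_eq_zero [FiniteDimensional F V] [Finite F]
    {S : Set (Submodule F V)} {e : Dual F V ≃ₗ[F] Matrix (Fin 2) (Fin 2) F}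
    (he : ∀ f, f ∈ dualCone S ↔ (e f).det = 0) {g : V ≃ₗ[F] Matrix (Fin 2) (Fin 2) F}
    (heg : ∀ f v, f v = (e f * g v).trace) {π : Submodule F V}
    (hπ : finrank F π + 1 = finrank F V) :
    π ∈ S ↔ {p : Submodule F V | finrank F p = 1 ∧ p ≤ π ∧ ∀ v ∈ p, (g v).det = 0}.ncard
      = Nat.card F + 1 := by
  obtain ⟨f, hf₀, rfl⟩ := exists_ker_eq_of_finrank_add_one_eq hπ
  rw [ncard_points_ker_det_eq_zero_iff heg hf₀, ne_eq, ← he]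
  exact not_not.symm

end TraceDuality

end HyperbolicQuadric

open HyperbolicQuadric in
theorem stmt_2_general {F V : Type*} [Field F] [Finite F] [AddCommGroup V] [Module F V]
    (hV : Module.finrank F V = 4) (S : Set (Submodule F V))
    (hplane : ∀ π ∈ S, Module.finrank F π = 3)
    (hP1 : ∀ p : Submodule F V, Module.finrank F p = 1 →
      {π ∈ S | p ≤ π}.ncard = Nat.card F ^ 2 - Nat.card F ∨
        {π ∈ S | p ≤ π}.ncard = Nat.card F ^ 2)
    (hP2 : ∀ L : Submodule F V, Module.finrank F L = 2 → (∃ π ∈ S, L ≤ π) →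
      Nat.card F - 1 ≤ {π ∈ S | L ≤ π}.ncard) :
    ∃ φ : QuadraticForm F V,
      (∀ x, (∀ y, φ (x + y) - φ x - φ y = 0) → x = 0) ∧
      (∃ W : Submodule F V, Module.finrank F W = 2 ∧ ∀ v ∈ W, φ v = 0) ∧
      S = {π : Submodule F V | Module.finrank F π = 3 ∧
        {p : Submodule F V | Module.finrank F p = 1 ∧ p ≤ π ∧ ∀ v ∈ p, φ v = 0}.ncard
          = Nat.card F + 1} := by
  have : FiniteDimensional F V := Module.finite_of_finrank_eq_succ hV
  have := Module.finite_of_finite F (M := Module.Dual F V)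
  obtain ⟨e, he⟩ := (isQuasiQuadric_dualCone hV hplane hP1 hP2).exists_linearEquiv_det
  obtain ⟨g, heg⟩ := exists_linearEquiv_apply_eq_trace_mul e
  obtain ⟨U, finrank_U, hU⟩ := exists_finrank_eq_two_detForm_eq_zero F
  refine ⟨(detForm F).comp g.toLinearMap, fun x hx => ?_, ⟨U.map g.symm.toLinearMap, ?_, ?_⟩, ?_⟩
  · refine g.map_eq_zero_iff.1 (eq_zero_of_polar_detForm_eq_zero fun N => ?_)
    simpa using hx (g.symm N)
  · rw [LinearEquiv.finrank_map_eq, finrank_U]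
  · rintro _ ⟨M, hM, rfl⟩
    simpa using hU M hM
  · ext π
    simp only [QuadraticMap.comp_apply, LinearEquiv.coe_coe, detForm_apply, Set.mem_ofPred_eq]
    rw [← and_iff_right_of_imp (hplane π)]
    exact and_congr_right fun hπ => mem_iff_ncard_points_det_eq_zero he heg (by rw [hπ, hV])

/-- For any prime power `q`, a nonempty family `S` of planes of `PG(3,q)` in which
every point lies in exactly `q²-q` or `q²` planes of `S`, and every line lying in some plane of
`S` lies in at least `q-1` planes of `S`, is the family of planes meeting some nonsingular
hyperbolic quadric of `PG(3,q)` in an irreducible conic (i.e. in exactly `q+1` points). -/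
theorem stmt_2 (F : Type) [Field F] [Fintype F] (q : ℕ) (hq : Fintype.card F = q)
    (S : Set (Submodule F (Fin 4 → F)))
    (hS : S.Nonempty)
    (hplane : ∀ π ∈ S, Module.finrank F π = 3)
    (hP1 : ∀ p : Submodule F (Fin 4 → F), Module.finrank F p = 1 →
      {π ∈ S | p ≤ π}.ncard = q^2 - q ∨ {π ∈ S | p ≤ π}.ncard = q^2)
    (hP2 : ∀ L : Submodule F (Fin 4 → F), Module.finrank F L = 2 →
      (∃ π ∈ S, L ≤ π) → q - 1 ≤ {π ∈ S | L ≤ π}.ncard) :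
    ∃ φ : QuadraticForm F (Fin 4 → F),
      (∀ x, (∀ y, φ (x + y) - φ x - φ y = 0) → x = 0) ∧
      (∃ W : Submodule F (Fin 4 → F), Module.finrank F W = 2 ∧ ∀ v ∈ W, φ v = 0) ∧
      S = {π : Submodule F (Fin 4 → F) | Module.finrank F π = 3 ∧
        {p : Submodule F (Fin 4 → F) |
          Module.finrank F p = 1 ∧ p ≤ π ∧ ∀ v ∈ p, φ v = 0}.ncard = q + 1} := by
  rw [← Nat.card_eq_fintype_card] at hq
  subst hq
  exact stmt_2_general (Module.finrank_fin_fun F) S hplane hP1 hP2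
end

section
/- Let q be any prime power and let Σ be a nonempty family of planes of PG(3,q) such that every point of PG(3,q) lies in exactly q²+q or exactly q² planes of Σ, and every line of PG(3,q) that is contained in at least one plane of Σ is contained in at least q−1 planes of Σ. Then either (i) there exists an ovoid O of PG(3,q) such that Σ is exactly the set of planes of PG(3,q) containing exactly q+1 points of O (the secant planes of O), or (ii) there exists a line l of PG(3,q) such that Σ is exactly the set of planes of PG(3,q) not containing l, equivalently the planes meeting l in a unique point. -/
/-!
Let `T` be the family of planes outside `S`. Every point lies on `1` or `q + 1` planes of `T`; let
`O` be the set of points on exactly one. Counting incident pairs of a point of `W` and a plane of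
`T`, for a subspace `W` of rank `n + 1`, gives

`q |O ∩ W| + |T| θ(n) + qⁿ |{σ ∈ T | W ≤ σ}| = (1 + q) θ(n + 1)`, where `θ(n) = ∑_{i < n} qⁱ`,

because `σ` meets `W` in `θ(n + 1) = θ(n) + qⁿ` points if it contains `W` and in `θ(n)` otherwise.
For the whole space this gives `|O|` in terms of `|T|`. For planes of `T` it shows that they all
contain the same number of points of `O`, so counting the incident pairs in `O × T` gives a second
relation. Together they force `|T| = q + 1` or `|T| = q² + 1`.

If `|T| = q + 1`, a point outside `O` lies on every plane of `T`, there are at least two such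
points, and `T` consists of the `q + 1` planes through the line joining them. If `|T| = q² + 1`,
the identity for lines and planes shows that `O` is an ovoid with secant planes the planes
outside `T`.
-/

theorem sum_eq_card_filter_mul_add {α : Type*} {s : Finset α} {P : α → Prop} [DecidablePred P]
    {f : α → ℕ} {m m' : ℕ} (hP : ∀ a ∈ s, P a → f a = m) (hP' : ∀ a ∈ s, ¬P a → f a = m') :
    ∑ a ∈ s, f a = (s.filter P).card * m + {a ∈ s | ¬P a}.card * m' := by
  rw [← Finset.sum_filter_add_sum_filter_not s P,
    Finset.sum_const_nat fun a ha => hP a (Finset.mem_filter.1 ha).1 (Finset.mem_filter.1 ha).2,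
    Finset.sum_const_nat fun a ha => hP' a (Finset.mem_filter.1 ha).1 (Finset.mem_filter.1 ha).2]

theorem ncard_mul_add_ncard_mul_eq {α β : Type*} {s : Set α} {t : Set β} (hs : s.Finite)
    (ht : t.Finite) (r : α → β → Prop) {P : α → Prop} {Q : β → Prop} {m m' k k' : ℕ}
    (hP : ∀ a ∈ s, P a → {b ∈ t | r a b}.ncard = m)
    (hP' : ∀ a ∈ s, ¬P a → {b ∈ t | r a b}.ncard = m')
    (hQ : ∀ b ∈ t, Q b → {a ∈ s | r a b}.ncard = k)
    (hQ' : ∀ b ∈ t, ¬Q b → {a ∈ s | r a b}.ncard = k') :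
    {a ∈ s | P a}.ncard * m + {a ∈ s | ¬P a}.ncard * m' =
      {b ∈ t | Q b}.ncard * k + {b ∈ t | ¬Q b}.ncard * k' := by
  classical
  lift s to Finset α using hs
  lift t to Finset β using ht
  simp only [Finset.mem_coe, ← Finset.coe_filter, Set.ncard_coe_finset] at *
  rw [← sum_eq_card_filter_mul_add hP hP', ← sum_eq_card_filter_mul_add hQ hQ']
  exact Finset.sum_card_bipartiteAbove_eq_sum_card_bipartiteBelow r

section

open Module

variable {F V : Type*} [Field F] [AddCommGroup V] [Module F V]

instance finite_submodule [Finite F] [FiniteDimensional F V] : Finite (Submodule F V) :=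
  have := Module.finite_of_finite F (M := V)
  inferInstance

/-- The points of the projective space of `V` lying on the subspace `W`, as submodules of rank
1. -/
def pointsOn (W : Submodule F V) : Set (Submodule F V) :=
  {p | finrank F p = 1 ∧ p ≤ W}

/-- The hyperplanes of `V` containing the subspace `W`; with `W = ⊥`, all hyperplanes. -/
def hyperplanesThrough (W : Submodule F V) : Set (Submodule F V) :=
  {σ | finrank F σ + 1 = finrank F V ∧ W ≤ σ}

theorem ncard_pointsOn [Finite F] {W : Submodule F V} {n : ℕ} (hW : finrank F W = n) :
    (pointsOn W).ncard = ∑ i ∈ Finset.range n, Nat.card F ^ i := by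
  have himage : pointsOn W = Submodule.map W.subtype '' {p | finrank F p = 1} := by
    ext p
    refine ⟨fun ⟨hp, hpW⟩ => ⟨p.comap W.subtype, ?_, ?_⟩, ?_⟩
    · exact (Submodule.comapSubtypeEquivOfLe hpW).finrank_eq.trans hp
    · simpa [Submodule.map_comap_subtype] using hpW
    · rintro ⟨p, hp, rfl⟩
      exact ⟨(Submodule.finrank_map_subtype_eq W p).trans hp, Submodule.map_subtype_le W p⟩
  rw [himage, Set.ncard_image_of_injective _
      (Submodule.map_injective_of_injective W.injective_subtype),
    ← Projectivization.card_of_finrank F W hW]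
  exact (Nat.card_congr (Projectivization.equivSubmodule F W)).symm

theorem ncard_hyperplanesThrough [Finite F] [FiniteDimensional F V] {W : Submodule F V} {n : ℕ}
    (hW : finrank F W + n = finrank F V) :
    (hyperplanesThrough W).ncard = ∑ i ∈ Finset.range n, Nat.card F ^ i := by
  have hann (U : Submodule F V) :
      finrank F U + finrank F U.dualAnnihilator = finrank F V :=
    Subspace.finrank_add_finrank_dualAnnihilator_eq U
  rw [← ncard_pointsOn (W := W.dualAnnihilator) (by have := hann W; omega)]
  refine Set.ncard_congr (fun σ _ => σ.dualAnnihilator) ?_ ?_ ?_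
  · rintro σ ⟨hσ, hWσ⟩
    exact ⟨by have := hann σ; omega, Submodule.dualAnnihilator_anti hWσ⟩
  · exact fun σ τ _ _ h => Subspace.dualAnnihilator_inj.1 h
  · rintro p ⟨hp, hpW⟩
    have hpann : p.dualCoannihilator.dualAnnihilator = p :=
      Subspace.dualCoannihilator_dualAnnihilator_eq
    have := hann p.dualCoannihilator
    rw [hpann] at this
    exact ⟨p.dualCoannihilator,
      ⟨by omega, Submodule.le_dualAnnihilator_iff_le_dualCoannihilator.1 hpW⟩, hpann⟩

theorem finrank_inf_hyperplane [FiniteDimensional F V] {W σ : Submodule F V} {n : ℕ}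
    (hσ : finrank F σ + 1 = finrank F V) (hW : finrank F W = n + 1) (hWσ : ¬W ≤ σ) :
    finrank F ↥(W ⊓ σ) = n := by
  have hsup := Submodule.finrank_lt_finrank_of_lt (right_lt_sup.2 hWσ)
  have hle := Submodule.finrank_le (W ⊔ σ)
  have := Submodule.finrank_sup_add_finrank_inf_eq W σ
  omega

theorem finrank_sup_eq_two_of_ne [FiniteDimensional F V] {p p' : Submodule F V}
    (hp : finrank F p = 1) (hp' : finrank F p' = 1) (hne : p ≠ p') :
    finrank F ↥(p ⊔ p') = 2 := by
  have hdisj : p ⊓ p' = ⊥ := ((Submodule.isAtom_iff_finrank_eq_one.2 hp).disjoint_of_ne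
    (Submodule.isAtom_iff_finrank_eq_one.2 hp') hne).eq_bot
  have := Submodule.finrank_sup_add_finrank_inf_eq p p'
  rw [hdisj, finrank_bot] at this
  omega

/-- A family of hyperplanes of type `(m, n)` with respect to points: every point lies on exactly
`m` or exactly `n` of them. This is the dual of a point set of type `(m, n)` with respect to
hyperplanes. -/
structure HasPointType (T : Set (Submodule F V)) (m n : ℕ) : Prop where
  finrank_add_one : ∀ σ ∈ T, finrank F σ + 1 = finrank F V
  ncard_through : ∀ p : Submodule F V, finrank F p = 1 →
    {σ ∈ T | p ≤ σ}.ncard = m ∨ {σ ∈ T | p ≤ σ}.ncard = n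

/-- The points lying on exactly `m` members of the family `T`. For `m = 1` and `T` the tangent
planes of an ovoid, these are the points of the ovoid. -/
def pointsOfDegree (T : Set (Submodule F V)) (m : ℕ) : Set (Submodule F V) :=
  {p | finrank F p = 1 ∧ {σ ∈ T | p ≤ σ}.ncard = m}

/-- An ovoid of `PG(3,q)`, where `q = Nat.card F`: a set of `q² + 1` points, at most two on any
line. The ambient space `V` is meant to have rank 4. -/
structure IsOvoid (O : Set (Submodule F V)) : Prop where
  finrank_eq_one : ∀ p ∈ O, finrank F p = 1
  ncard_eq : O.ncard = Nat.card F ^ 2 + 1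
  ncard_le_two : ∀ L : Submodule F V, finrank F L = 2 → {p ∈ O | p ≤ L}.ncard ≤ 2

namespace HasPointType

variable [Finite F] [FiniteDimensional F V] {T : Set (Submodule F V)} {m n e d : ℕ}

theorem compl (hT : HasPointType T m n) {m' n' : ℕ} (hV : finrank F V = d + 1)
    (hm : m + m' = ∑ i ∈ Finset.range d, Nat.card F ^ i)
    (hn : n + n' = ∑ i ∈ Finset.range d, Nat.card F ^ i) :
    HasPointType (hyperplanesThrough ⊥ \ T) m' n' where
  finrank_add_one _ hσ := hσ.1.1
  ncard_through p hp := by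
    have hsplit : {σ ∈ hyperplanesThrough ⊥ \ T | p ≤ σ} =
        hyperplanesThrough p \ {σ ∈ T | p ≤ σ} := by
      ext σ
      simp only [hyperplanesThrough, Set.mem_sdiff, Set.mem_ofPred_eq, bot_le]
      tauto
    have hsub : {σ ∈ T | p ≤ σ} ⊆ hyperplanesThrough p := fun σ hσ =>
      ⟨hT.finrank_add_one σ hσ.1, hσ.2⟩
    have hcard := Set.ncard_sdiff_add_ncard_of_subset hsub
    rw [← hsplit, ncard_hyperplanesThrough (n := d) (by omega)] at hcard
    have := hT.ncard_through p hp
    omega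

theorem mul_ncard_sep_le_add (hT : HasPointType T m (m + e)) {W : Submodule F V}
    (hW : finrank F W = n + 1) :
    e * {p ∈ pointsOfDegree T m | p ≤ W}.ncard +
        (T.ncard * ∑ i ∈ Finset.range n, Nat.card F ^ i +
          {σ ∈ T | W ≤ σ}.ncard * Nat.card F ^ n) =
      (m + e) * ∑ i ∈ Finset.range (n + 1), Nat.card F ^ i := by
  have hthrough (σ) (_ : σ ∈ T) (hWσ : W ≤ σ) :
      {p ∈ pointsOn W | p ≤ σ}.ncard = ∑ i ∈ Finset.range (n + 1), Nat.card F ^ i := by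
    rw [Set.sep_eq_self_iff_mem_true.2 fun p hp => hp.2.trans hWσ, ncard_pointsOn hW]
  have hmeet (σ) (hσ : σ ∈ T) (hWσ : ¬W ≤ σ) :
      {p ∈ pointsOn W | p ≤ σ}.ncard = ∑ i ∈ Finset.range n, Nat.card F ^ i := by
    rw [← ncard_pointsOn (finrank_inf_hyperplane (hT.finrank_add_one σ hσ) hW hWσ)]
    simp only [pointsOn, Set.mem_ofPred_eq, and_assoc, le_inf_iff]
  have hcount := ncard_mul_add_ncard_mul_eq (Set.toFinite (pointsOn W)) (Set.toFinite T) (· ≤ ·)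
    (P := (· ∈ pointsOfDegree T m)) (m' := m + e) (fun p _ h => h.2)
    (fun p hp h => (hT.ncard_through p hp.1).resolve_left fun h' => h ⟨hp.1, h'⟩)
    hthrough hmeet
  have hO : {p ∈ pointsOn W | p ∈ pointsOfDegree T m} = {p ∈ pointsOfDegree T m | p ≤ W} := by
    ext p
    simp only [pointsOn, pointsOfDegree, Set.mem_ofPred_eq]
    tauto
  have hpoints : {p ∈ pointsOn W | p ∈ pointsOfDegree T m}.ncard +
      {p ∈ pointsOn W | p ∉ pointsOfDegree T m}.ncard = (pointsOn W).ncard :=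
    Set.ncard_inter_add_ncard_sdiff_eq_ncard _ (pointsOfDegree T m)
  have hplanes : {σ ∈ T | W ≤ σ}.ncard + {σ ∈ T | ¬W ≤ σ}.ncard = T.ncard :=
    Set.ncard_inter_add_ncard_sdiff_eq_ncard _ {σ | W ≤ σ}
  rw [hO, ncard_pointsOn hW] at hpoints
  rw [hO] at hcount
  rw [← hplanes, ← hpoints, Finset.sum_range_succ] at *
  linarith

theorem mul_ncard_pointsOfDegree_add (hT : HasPointType T m (m + e)) (hV : finrank F V = d + 1) :
    e * (pointsOfDegree T m).ncard + T.ncard * ∑ i ∈ Finset.range d, Nat.card F ^ i =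
      (m + e) * ∑ i ∈ Finset.range (d + 1), Nat.card F ^ i := by
  have hnone : {σ ∈ T | ⊤ ≤ σ} = ∅ := Set.sep_eq_empty_iff_mem_false.2 fun σ hσ hle => by
    have := hT.finrank_add_one σ hσ
    rw [top_le_iff.1 hle, finrank_top] at this
    omega
  have hcount := hT.mul_ncard_sep_le_add (W := ⊤) ((finrank_top F V).trans hV)
  simpa only [hnone, le_top, and_true, Set.ofPred_mem_eq, Set.ncard_empty, zero_mul, add_zero]
    using hcount

theorem mul_ncard_sep_le_add_of_mem (hT : HasPointType T m (m + e)) (hV : finrank F V = d + 2)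
    {π : Submodule F V} (hπ : π ∈ T) :
    e * {p ∈ pointsOfDegree T m | p ≤ π}.ncard +
        (T.ncard * ∑ i ∈ Finset.range d, Nat.card F ^ i + Nat.card F ^ d) =
      (m + e) * ∑ i ∈ Finset.range (d + 1), Nat.card F ^ i := by
  have hfinrank : finrank F π = d + 1 := by have := hT.finrank_add_one π hπ; omega
  have hself : {σ ∈ T | π ≤ σ} = {π} := by
    ext σ
    refine ⟨fun ⟨hσ, hle⟩ => ?_, by rintro rfl; exact ⟨hπ, le_rfl⟩⟩
    have := hT.finrank_add_one σ hσ
    exact (Submodule.eq_of_le_of_finrank_eq hle (by omega)).symm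
  simpa [hself] using hT.mul_ncard_sep_le_add hfinrank

theorem mul_ncard_sep_le_add_of_notMem (hT : HasPointType T m (m + e)) (hV : finrank F V = d + 2)
    {π : Submodule F V} (hfinrank : finrank F π = d + 1) (hπ : π ∉ T) :
    e * {p ∈ pointsOfDegree T m | p ≤ π}.ncard +
        T.ncard * ∑ i ∈ Finset.range d, Nat.card F ^ i =
      (m + e) * ∑ i ∈ Finset.range (d + 1), Nat.card F ^ i := by
  have hnone : {σ ∈ T | π ≤ σ} = ∅ := Set.sep_eq_empty_iff_mem_false.2 fun σ hσ hle =>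
    hπ (Submodule.eq_of_le_of_finrank_eq hle
      (by have := hT.finrank_add_one σ hσ; omega) ▸ hσ)
  simpa [hnone] using hT.mul_ncard_sep_le_add hfinrank

theorem mul_mul_ncard_pointsOfDegree_add (hT : HasPointType T m (m + e)) (he : e ≠ 0)
    (hV : finrank F V = d + 2) :
    m * e * (pointsOfDegree T m).ncard +
        T.ncard * (T.ncard * ∑ i ∈ Finset.range d, Nat.card F ^ i + Nat.card F ^ d) =
      T.ncard * ((m + e) * ∑ i ∈ Finset.range (d + 1), Nat.card F ^ i) := by
  obtain ⟨k, hk⟩ : ∃ k, ∀ σ ∈ T, {p ∈ pointsOfDegree T m | p ≤ σ}.ncard = k := by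
    rcases T.eq_empty_or_nonempty with rfl | ⟨π, hπ⟩
    · simp
    · refine ⟨{p ∈ pointsOfDegree T m | p ≤ π}.ncard, fun σ hσ => mul_left_cancel₀ he ?_⟩
      exact Nat.add_right_cancel
        ((hT.mul_ncard_sep_le_add_of_mem hV hσ).trans (hT.mul_ncard_sep_le_add_of_mem hV hπ).symm)
  have hflags : (pointsOfDegree T m).ncard * m = T.ncard * k := by
    simpa using ncard_mul_add_ncard_mul_eq (s := pointsOfDegree T m) (t := T) (Set.toFinite _)
      (Set.toFinite _) (· ≤ ·) (P := fun _ => True) (Q := fun _ => True) (m' := 0) (k' := 0)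
      (fun p hp _ => hp.2) (by simp) (fun σ hσ _ => hk σ hσ) (by simp)
  rcases T.eq_empty_or_nonempty with rfl | ⟨π, hπ⟩
  · simp only [Set.ncard_empty, zero_mul] at hflags ⊢
    linear_combination e * hflags
  · have hplane := hT.mul_ncard_sep_le_add_of_mem hV hπ
    rw [hk π hπ] at hplane
    linear_combination e * hflags + T.ncard * hplane

theorem ncard_eq_or_ncard_eq (hT : HasPointType T 1 (1 + Nat.card F)) (hV : finrank F V = 4) :
    T.ncard = Nat.card F + 1 ∨ T.ncard = Nat.card F ^ 2 + 1 := by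
  have htotal := hT.mul_ncard_pointsOfDegree_add hV
  have hflags := hT.mul_mul_ncard_pointsOfDegree_add Nat.card_pos.ne' hV
  simp only [Finset.sum_range_succ, Finset.sum_range_zero] at htotal hflags
  zify at htotal hflags ⊢
  have hfactor : ((Nat.card F : ℤ) + 1) *
      ((T.ncard - (Nat.card F + 1)) * (T.ncard - (Nat.card F ^ 2 + 1))) = 0 := by
    linear_combination hflags - htotal
  have hpos : (Nat.card F : ℤ) + 1 ≠ 0 := by positivity
  rcases mul_eq_zero.1 ((mul_eq_zero.1 hfactor).resolve_left hpos) with h | h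
  · exact .inl (sub_eq_zero.1 h)
  · exact .inr (sub_eq_zero.1 h)

theorem exists_eq_hyperplanesThrough_of_ncard_eq (hT : HasPointType T 1 (1 + Nat.card F))
    (hV : finrank F V = 4) (hcard : T.ncard = Nat.card F + 1) :
    ∃ l : Submodule F V, finrank F l = 2 ∧ T = hyperplanesThrough l := by
  have hq : 0 < Nat.card F := Nat.card_pos
  have htotal := hT.mul_ncard_pointsOfDegree_add hV
  have hpoints := ncard_pointsOn ((finrank_top F V).trans hV)
  have hsub : pointsOfDegree T 1 ⊆ pointsOn ⊤ := fun p hp => ⟨hp.1, le_top⟩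
  have hdiff := Set.ncard_sdiff_add_ncard_of_subset hsub
  have hrest : (pointsOn ⊤ \ pointsOfDegree T 1).ncard = Nat.card F + 1 := by
    refine Nat.eq_of_mul_eq_mul_left hq ?_
    simp only [hcard, hpoints, Finset.sum_range_succ, Finset.sum_range_zero] at htotal hdiff
    linear_combination Nat.card F * hdiff - htotal
  have hle (p) (hp : p ∈ pointsOn ⊤ \ pointsOfDegree T 1) (σ) (hσ : σ ∈ T) : p ≤ σ := by
    have hdeg := (hT.ncard_through p hp.1.1).resolve_left fun h => hp.2 ⟨hp.1.1, h⟩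
    have hall : {σ ∈ T | p ≤ σ} = T :=
      Set.eq_of_subset_of_ncard_le (Set.sep_subset _ _) (by omega)
    exact Set.sep_eq_self_iff_mem_true.1 hall σ hσ
  obtain ⟨p₁, hp₁, p₂, hp₂, hne⟩ := (Set.one_lt_ncard (s := pointsOn ⊤ \ pointsOfDegree T 1)).1
    (by omega)
  have hl := finrank_sup_eq_two_of_ne hp₁.1.1 hp₂.1.1 hne
  refine ⟨p₁ ⊔ p₂, hl, Set.eq_of_subset_of_ncard_le (fun σ hσ => ?_) ?_⟩
  · exact ⟨hT.finrank_add_one σ hσ, sup_le (hle p₁ hp₁ σ hσ) (hle p₂ hp₂ σ hσ)⟩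
  · rw [ncard_hyperplanesThrough (n := 2) (by omega), hcard]
    simp [Finset.sum_range_succ, add_comm]

theorem isOvoid_pointsOfDegree_one (hT : HasPointType T 1 (1 + Nat.card F))
    (hV : finrank F V = 4) (hcard : T.ncard = Nat.card F ^ 2 + 1) :
    IsOvoid (pointsOfDegree T 1) where
  finrank_eq_one _ hp := hp.1
  ncard_eq := by
    have htotal := hT.mul_ncard_pointsOfDegree_add hV
    simp only [hcard, Finset.sum_range_succ, Finset.sum_range_zero] at htotal
    refine Nat.eq_of_mul_eq_mul_left (Nat.card_pos (α := F)) ?_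
    linarith
  ncard_le_two L hL := by
    have hline := hT.mul_ncard_sep_le_add hL
    simp only [hcard, Finset.sum_range_succ, Finset.sum_range_zero] at hline
    have htwo : {p ∈ pointsOfDegree T 1 | p ≤ L}.ncard + {σ ∈ T | L ≤ σ}.ncard = 2 := by
      refine Nat.eq_of_mul_eq_mul_left (Nat.card_pos (α := F)) ?_
      linarith
    omega

theorem notMem_iff_ncard_eq (hT : HasPointType T 1 (1 + Nat.card F)) (hV : finrank F V = 4)
    (hcard : T.ncard = Nat.card F ^ 2 + 1) {π : Submodule F V} (hπ : finrank F π = 3) :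
    π ∉ T ↔ {p ∈ pointsOfDegree T 1 | p ≤ π}.ncard = Nat.card F + 1 := by
  have hq : 0 < Nat.card F := Nat.card_pos
  refine ⟨fun hmem => ?_, fun hsecant hmem => ?_⟩
  · have hplane := hT.mul_ncard_sep_le_add_of_notMem hV hπ hmem
    simp only [hcard, Finset.sum_range_succ, Finset.sum_range_zero] at hplane
    refine Nat.eq_of_mul_eq_mul_left hq ?_
    linarith
  · have hplane := hT.mul_ncard_sep_le_add_of_mem hV hmem
    simp only [hcard, hsecant, Finset.sum_range_succ, Finset.sum_range_zero] at hplane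
    have : Nat.card F ^ 2 = 0 := by linarith
    simp [hq.ne'] at this

end HasPointType

theorem stmt_3_general {F V : Type*} [Field F] [Finite F] [AddCommGroup V] [Module F V]
    (hV : finrank F V = 4) {S : Set (Submodule F V)}
    (hplane : ∀ π ∈ S, finrank F π = 3)
    (hpoint : ∀ p : Submodule F V, finrank F p = 1 →
      {π ∈ S | p ≤ π}.ncard = Nat.card F ^ 2 + Nat.card F ∨
        {π ∈ S | p ≤ π}.ncard = Nat.card F ^ 2) :
    (∃ O : Set (Submodule F V), IsOvoid O ∧
      S = {π : Submodule F V | finrank F π = 3 ∧ {p ∈ O | p ≤ π}.ncard = Nat.card F + 1}) ∨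
    (∃ l : Submodule F V, finrank F l = 2 ∧
      S = {π : Submodule F V | finrank F π = 3 ∧ ¬l ≤ π}) := by
  have : FiniteDimensional F V := .of_finrank_pos (by omega)
  have hS : HasPointType S (Nat.card F ^ 2 + Nat.card F) (Nat.card F ^ 2) :=
    ⟨fun π hπ => by rw [hplane π hπ, hV], hpoint⟩
  have hT : HasPointType (hyperplanesThrough ⊥ \ S) 1 (1 + Nat.card F) :=
    hS.compl hV (by simp only [Finset.sum_range_succ, Finset.sum_range_zero]; ring)
      (by simp only [Finset.sum_range_succ, Finset.sum_range_zero]; ring)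
  have hmem (π : Submodule F V) : π ∈ S ↔ finrank F π = 3 ∧ π ∉ hyperplanesThrough ⊥ \ S := by
    have := hplane π
    simp only [hyperplanesThrough, hV, Set.mem_sdiff, Set.mem_ofPred_eq, bot_le, and_true]
    grind
  rcases hT.ncard_eq_or_ncard_eq hV with hcard | hcard
  · obtain ⟨l, hl, hTl⟩ := hT.exists_eq_hyperplanesThrough_of_ncard_eq hV hcard
    refine .inr ⟨l, hl, Set.ext fun π => (hmem π).trans (and_congr_right fun hπ => ?_)⟩
    rw [hTl]
    simp [hyperplanesThrough, hπ, hV]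
  · exact .inl ⟨_, hT.isOvoid_pointsOfDegree_one hV hcard, Set.ext fun π =>
      (hmem π).trans (and_congr_right fun hπ => hT.notMem_iff_ncard_eq hV hcard hπ)⟩

end

/-- For any prime power `q`, a nonempty family `S` of planes of `PG(3,q)` in which
every point lies in exactly `q²+q` or `q²` planes of `S`, and every line lying in some plane of
`S` lies in at least `q-1` planes of `S`, is either the family of secant planes of an ovoid of
`PG(3,q)`, or the family of planes meeting a fixed line `l` in a unique point (i.e. not
containing `l`). -/
theorem stmt_3 (F : Type) [Field F] [Fintype F] (q : ℕ) (hq : Fintype.card F = q)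
    (S : Set (Submodule F (Fin 4 → F)))
    (hS : S.Nonempty)
    (hplane : ∀ π ∈ S, Module.finrank F π = 3)
    (hP1 : ∀ p : Submodule F (Fin 4 → F), Module.finrank F p = 1 →
      {π ∈ S | p ≤ π}.ncard = q^2 + q ∨ {π ∈ S | p ≤ π}.ncard = q^2)
    (hP2 : ∀ L : Submodule F (Fin 4 → F), Module.finrank F L = 2 →
      (∃ π ∈ S, L ≤ π) → q - 1 ≤ {π ∈ S | L ≤ π}.ncard) :
    (∃ O : Set (Submodule F (Fin 4 → F)),
      (∀ p ∈ O, Module.finrank F p = 1) ∧ O.ncard = q^2 + 1 ∧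
      (∀ L : Submodule F (Fin 4 → F), Module.finrank F L = 2 → {p ∈ O | p ≤ L}.ncard ≤ 2) ∧
      S = {π : Submodule F (Fin 4 → F) | Module.finrank F π = 3 ∧
        {p ∈ O | p ≤ π}.ncard = q + 1}) ∨
    (∃ l : Submodule F (Fin 4 → F), Module.finrank F l = 2 ∧
      S = {π : Submodule F (Fin 4 → F) | Module.finrank F π = 3 ∧ ¬ l ≤ π}) := by
  obtain rfl : Nat.card F = q := Nat.card_eq_fintype_card.trans hq
  rcases stmt_3_general (Module.finrank_fin_fun F) hplane hP1 with ⟨O, hO, hSO⟩ | hl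
  · exact .inl ⟨O, hO.finrank_eq_one, hO.ncard_eq, hO.ncard_le_two, hSO⟩
  · exact .inr hl
end

section
/- Let n ≥ 1, let φ be a nonsingular hyperbolic quadratic form on V = F^{2n+2} with hyperbolic quadric Q = Q^+(2n+1,q), and let Σ be the set of all hyperplanes of PG(2n+1,q) containing exactly (q^{2n}−1)/(q−1) points of Q. Then: (1) every point of Q is contained in exactly q^n(q^n−1) hyperplanes of Σ and every point of PG(2n+1,q) not in Q is contained in exactly q^{2n} hyperplanes of Σ; (2) every subspace of codimension 2 of PG(2n+1,q) is contained in exactly 0, q−1, q, or q+1 hyperplanes of Σ. -/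
/-!
For a subspace `X` compare `q` times the number of its singular vectors with `|X|`. If `e ∈ X` is
singular, then `φ (x + t • e) = φ x + t * polar φ x e`, so translation by multiples of `e` spreads
the values of `φ` evenly over the vectors of `X` not orthogonal to `e`; these contribute nothing to
the difference. Hence the difference for `X` equals that for `X ∩ W^⊥` whenever `W ≤ X` is totally
singular, which determines it for `V` and for every hyperplane `u^⊥`: it vanishes exactly when `u`
is nonsingular. The hyperplanes in question are therefore the `u^⊥` with `u` nonsingular, and those
through `Y` correspond to the nonsingular points of `Y^⊥`. Counting the latter is again a matter of
the difference for `Y^⊥`, which is a hyperplane if `Y` is a point and a line if `Y` has codimension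
two.
-/

open Module Submodule QuadraticMap

section Orthogonality

variable {F V : Type*} [Field F] [AddCommGroup V] [Module F V] {φ : QuadraticForm F V}
  {W X Y : Submodule F V} {u : V}

/-- The orthogonal complement of a subspace with respect to the polar form of `φ`. -/
abbrev perp (φ : QuadraticForm F V) (X : Submodule F V) : Submodule F V :=
  LinearMap.BilinForm.orthogonal φ.polarBilin X

theorem mem_perp_span_singleton {x : V} : x ∈ perp φ (F ∙ u) ↔ polar φ u x = 0 := by
  refine ⟨fun hx => hx u (mem_span_singleton_self u), fun hx y hy => ?_⟩
  obtain ⟨a, rfl⟩ := mem_span_singleton.1 hy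
  rw [map_smul, LinearMap.smul_apply, polarBilin_apply_apply, hx, smul_zero]

theorem isRefl_polarBilin (φ : QuadraticForm F V) :
    LinearMap.BilinForm.IsRefl φ.polarBilin :=
  fun x y h => (polar_comm φ y x).trans h

theorem le_perp_comm : X ≤ perp φ Y ↔ Y ≤ perp φ X :=
  ⟨fun h _ hy _ hx => isRefl_polarBilin φ _ _ (h hx _ hy),
    fun h _ hx _ hy => isRefl_polarBilin φ _ _ (h hy _ hx)⟩

theorem perp_sup (φ : QuadraticForm F V) (X Y : Submodule F V) :
    perp φ (X ⊔ Y) = perp φ X ⊓ perp φ Y :=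
  eq_of_forall_le_iff fun Z => by
    rw [le_inf_iff, le_perp_comm, sup_le_iff, le_perp_comm, le_perp_comm (X := Y)]

section Nondegenerate

variable [FiniteDimensional F V]

theorem finrank_perp_add_finrank (hφ : φ.polarBilin.Nondegenerate) (X : Submodule F V) :
    finrank F (perp φ X) + finrank F X = finrank F V := by
  rw [LinearMap.BilinForm.finrank_orthogonal hφ, Nat.sub_add_cancel X.finrank_le]

theorem perp_perp (hφ : φ.polarBilin.Nondegenerate) (X : Submodule F V) :
    perp φ (perp φ X) = X :=
  LinearMap.BilinForm.orthogonal_orthogonal hφ (isRefl_polarBilin φ) X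

end Nondegenerate

/-- A subspace is totally singular if `φ` vanishes identically on it. -/
def TotallySingular (φ : QuadraticForm F V) (X : Submodule F V) : Prop :=
  ∀ x ∈ X, φ x = 0

theorem TotallySingular.mono (hY : TotallySingular φ Y) (hXY : X ≤ Y) : TotallySingular φ X :=
  fun x hx => hY x (hXY hx)

theorem TotallySingular.le_perp (hX : TotallySingular φ X) : X ≤ perp φ X := fun x hx y hy => by
  rw [polarBilin_apply_apply, polar, hX _ (add_mem hy hx), hX y hy, hX x hx, sub_zero, sub_zero]

theorem TotallySingular.perp_eq_self [FiniteDimensional F V] (hφ : φ.polarBilin.Nondegenerate)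
    (hW : TotallySingular φ W) (hdim : finrank F V = 2 * finrank F W) : perp φ W = W := by
  have := finrank_perp_add_finrank hφ W
  exact (eq_of_le_of_finrank_eq hW.le_perp (by lia)).symm

theorem totallySingular_span_singleton : TotallySingular φ (F ∙ u) ↔ φ u = 0 := by
  refine ⟨fun h => h u (mem_span_singleton_self u), fun hu x hx => ?_⟩
  obtain ⟨a, rfl⟩ := mem_span_singleton.1 hx
  rw [QuadraticMap.map_smul, hu, smul_zero]

theorem TotallySingular.sup (hX : TotallySingular φ X) (hY : TotallySingular φ Y)
    (hXY : Y ≤ perp φ X) : TotallySingular φ (X ⊔ Y) := by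
  intro z hz
  obtain ⟨x, hx, y, hy, rfl⟩ := mem_sup.1 hz
  have hxy : polar φ x y = 0 := hXY hy x hx
  rw [QuadraticMap.map_add φ, hX x hx, hY y hy, hxy, add_zero, add_zero]

theorem mem_of_singular_of_mem_sup_span_singleton {x : V} (hW : TotallySingular φ W)
    (hu : φ u ≠ 0) (hx : x ∈ W ⊔ F ∙ u) (hux : polar φ u x = 0) (hφx : φ x = 0) : x ∈ W := by
  obtain ⟨w, hw, y, hy, rfl⟩ := mem_sup.1 hx
  obtain ⟨t, rfl⟩ := mem_span_singleton.1 hy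
  have hvalue : φ (w + t • u) = t * t * φ u + t * polar φ u w := by
    rw [QuadraticMap.map_add φ, hW w hw, QuadraticMap.map_smul, polar_smul_right, polar_comm φ w,
      smul_eq_mul, smul_eq_mul, zero_add]
  have hpolar : polar φ u (w + t • u) = polar φ u w + t * (2 * φ u) := by
    rw [polar_add_right, polar_smul_right, polar_self, smul_eq_mul, nsmul_eq_mul, Nat.cast_two]
  have hsq : t * t * φ u = 0 := by linear_combination hvalue - hφx - t * (hpolar - hux)
  have ht : t = 0 := by simpa [hu] using hsq
  rwa [ht, zero_smul, add_zero]

end Orthogonality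

section SingularExcess

variable {F V : Type*} [Field F] [AddCommGroup V] [Module F V] {φ : QuadraticForm F V}
  {U W X : Submodule F V} {e u : V}

/-- `q` times the number of singular vectors of `X`, minus the number of all vectors of `X`. It
compares the number of zeros of `φ` on `X` with the number expected of an equidistributed function;
being possibly negative, it takes values in `ℤ`. -/
noncomputable def singularExcess (φ : QuadraticForm F V) (X : Submodule F V) : ℤ :=
  Nat.card F * {x ∈ X | φ x = 0}.ncard - Nat.card X

theorem card_mul_ncard_singular_not_orthogonal (he : φ e = 0) (heX : e ∈ X) :
    Nat.card F * {x ∈ X | φ x = 0 ∧ polar φ e x ≠ 0}.ncard =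
      {x ∈ X | polar φ e x ≠ 0}.ncard := by
  have hpolar (x : V) (t : F) : polar φ e (x + t • e) = polar φ e x := by
    rw [polar_add_right, polar_smul_right, polar_self, he, smul_zero, smul_zero, add_zero]
  have hvalue (x : V) (t : F) : φ (x + t • e) = φ x + t * polar φ e x := by
    rw [QuadraticMap.map_add φ, QuadraticMap.map_smul, he, smul_zero, add_zero, polar_smul_right,
      smul_eq_mul, polar_comm]
  rw [← Set.ncard_univ, ← Set.ncard_prod]
  refine Set.BijOn.ncard_eq (f := fun p : F × V => p.2 + p.1 • e)
    (Set.InvOn.bijOn (f' := fun y => (φ y / polar φ e y, y + (-(φ y / polar φ e y)) • e))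
      ⟨?_, ?_⟩ ?_ ?_)
  · rintro ⟨t, x⟩ ⟨-, -, hx, hex⟩
    have ht : φ (x + t • e) / polar φ e (x + t • e) = t := by
      rw [hvalue, hpolar, hx, zero_add, mul_div_cancel_right₀ t hex]
    simp only [ht, neg_smul, add_neg_cancel_right]
  · intro y _
    simp only [neg_smul, neg_add_cancel_right]
  · rintro ⟨t, x⟩ ⟨-, hxX, -, hex⟩
    exact ⟨add_mem hxX (X.smul_mem t heX), (hpolar x t).trans_ne hex⟩
  · rintro y ⟨hyX, hey⟩
    refine ⟨Set.mem_univ _, add_mem hyX (X.smul_mem _ heX), ?_, (hpolar y _).trans_ne hey⟩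
    rw [hvalue, neg_mul, div_mul_cancel₀ _ hey, add_neg_cancel]

theorem singularExcess_eq_inf_perp_span_singleton [Finite V] (he : φ e = 0) (heX : e ∈ X) :
    singularExcess φ X = singularExcess φ (X ⊓ perp φ (F ∙ e)) := by
  have hsplit (P : V → Prop) : {x ∈ X | P x}.ncard =
      {x ∈ X ⊓ perp φ (F ∙ e) | P x}.ncard + {x ∈ X | P x ∧ polar φ e x ≠ 0}.ncard := by
    rw [← Set.ncard_inter_add_ncard_sdiff_eq_ncard {x ∈ X | P x} (perp φ (F ∙ e))]
    congr 2 <;> ext x <;>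
      simp only [Set.mem_inter_iff, Set.mem_sdiff, Set.mem_ofPred_eq, SetLike.mem_coe, mem_inf,
        mem_perp_span_singleton] <;> tauto
  have hsingular := hsplit fun x => φ x = 0
  have hall := hsplit fun _ => True
  simp only [and_true, true_and] at hall
  rw [← card_mul_ncard_singular_not_orthogonal he heX] at hall
  have hcard (Y : Submodule F V) : Nat.card Y = {x | x ∈ Y}.ncard := rfl
  rw [singularExcess, singularExcess, hsingular, hcard, hcard, hall]
  push_cast
  ring

theorem singularExcess_eq_inf_perp [Finite V] (hW : TotallySingular φ W) (hWX : W ≤ X) :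
    singularExcess φ X = singularExcess φ (X ⊓ perp φ W) := by
  induction W, IsNoetherian.noetherian W using Submodule.fg_induction generalizing X with
  | singleton e =>
    rw [span_singleton_le_iff_mem] at hWX
    exact singularExcess_eq_inf_perp_span_singleton (totallySingular_span_singleton.1 hW) hWX
  | sup W₁ W₂ _ _ ih₁ ih₂ =>
    have hW₂ : W₂ ≤ X ⊓ perp φ W₁ := le_inf (le_sup_right.trans hWX)
      (le_sup_right.trans (hW.le_perp.trans (LinearMap.BilinForm.orthogonal_le le_sup_left)))
    rw [ih₁ (hW.mono le_sup_left) (le_sup_left.trans hWX), ih₂ (hW.mono le_sup_right) hW₂,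
      inf_assoc, perp_sup]

variable [FiniteDimensional F V]

theorem singularExcess_of_singular_iff_mem (hUX : U ≤ X) (hU : ∀ x ∈ X, φ x = 0 ↔ x ∈ U) :
    singularExcess φ X = (Nat.card F : ℤ) ^ (finrank F U + 1) - Nat.card F ^ finrank F X := by
  have hset : {x ∈ X | φ x = 0} = U :=
    Set.ext fun x => ⟨fun h => (hU x h.1).1 h.2, fun h => ⟨hUX h, (hU x (hUX h)).2 h⟩⟩
  have hcard : (U : Set V).ncard = Nat.card F ^ finrank F U :=
    natCard_eq_pow_finrank (K := F) (V := U)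
  rw [singularExcess, hset, hcard, natCard_eq_pow_finrank (K := F) (V := X), pow_succ']
  push_cast
  rfl

theorem TotallySingular.singularExcess (hX : TotallySingular φ X) :
    singularExcess φ X = (Nat.card F : ℤ) ^ (finrank F X + 1) - Nat.card F ^ finrank F X :=
  singularExcess_of_singular_iff_mem le_rfl fun x hx => iff_of_true (hX x hx) hx

variable [Finite F]

theorem singularExcess_perp_of_singular (hW : TotallySingular φ W) (hperp : perp φ W = W)
    (hu : φ u = 0) :
    singularExcess φ (perp φ (F ∙ u)) =
      (Nat.card F : ℤ) ^ (finrank F W + 1) - Nat.card F ^ finrank F W := by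
  have : Finite V := Module.finite_of_finite F
  rw [← hW.singularExcess, ← top_inf_eq (perp φ (F ∙ u)),
    ← singularExcess_eq_inf_perp (totallySingular_span_singleton.2 hu) le_top,
    singularExcess_eq_inf_perp hW le_top, top_inf_eq, hperp]

theorem singularExcess_perp_of_nonsingular (hφ : φ.polarBilin.Nondegenerate)
    (hW : TotallySingular φ W) (hperp : perp φ W = W) (hu : φ u ≠ 0) :
    singularExcess φ (perp φ (F ∙ u)) = 0 := by
  have : Finite V := Module.finite_of_finite F
  have huW : u ∉ W := fun h => hu (hW u h)
  set U := W ⊓ perp φ (F ∙ u)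
  have hU : U = perp φ (W ⊔ F ∙ u) := by rw [perp_sup, hperp]
  have hUperp : perp φ U = W ⊔ F ∙ u := by rw [hU, perp_perp hφ]
  have hUs : TotallySingular φ U := hW.mono inf_le_left
  rw [singularExcess_eq_inf_perp hUs inf_le_right,
    singularExcess_of_singular_iff_mem (U := U) (le_inf inf_le_right hUs.le_perp)]
  · have hdimU := finrank_perp_add_finrank hφ U
    have hdim := finrank_perp_add_finrank hφ (U ⊔ F ∙ u)
    rw [finrank_sup_span_singleton fun h : u ∈ U => huW h.1, perp_sup, inf_comm] at hdim
    rw [hUperp, finrank_sup_span_singleton huW] at hdimU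
    have hdimW := finrank_perp_add_finrank hφ W
    rw [hperp] at hdimW
    rw [show finrank F ↥(perp φ (F ∙ u) ⊓ perp φ U) = finrank F U + 1 by lia, sub_self]
  · rintro x ⟨hxu, hxU⟩
    rw [hUperp] at hxU
    exact ⟨fun hx => ⟨mem_of_singular_of_mem_sup_span_singleton hW hu hxU
      (mem_perp_span_singleton.1 hxu) hx, hxu⟩, hUs x⟩

theorem singularExcess_of_finrank_eq_two (hX : finrank F X = 2) :
    singularExcess φ X = Nat.card F - (Nat.card F : ℤ) ^ 2 ∨
      singularExcess φ X = 0 ∨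
      singularExcess φ X = (Nat.card F : ℤ) ^ 2 - Nat.card F ∨
      singularExcess φ X = (Nat.card F : ℤ) ^ 3 - Nat.card F ^ 2 := by
  have : Finite V := Module.finite_of_finite F
  by_cases! hsing : ∀ e ∈ X, φ e = 0 → e = 0
  · left
    rw [singularExcess_of_singular_iff_mem bot_le fun x hx =>
      ⟨hsing x hx, fun h => (mem_bot F).1 h ▸ QuadraticMap.map_zero φ⟩]
    simp [hX]
  obtain ⟨e, heX, he, he0⟩ := hsing
  have hline : finrank F (F ∙ e) = 1 := finrank_span_singleton he0
  have hle : F ∙ e ≤ X := (span_singleton_le_iff_mem e X).2 heX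
  have hes : TotallySingular φ (F ∙ e) := totallySingular_span_singleton.2 he
  by_cases hperp : X ≤ perp φ (F ∙ e)
  · by_cases! hf : ∀ f ∈ X, φ f = 0 → f ∈ F ∙ e
    · right; left
      rw [singularExcess_of_singular_iff_mem hle fun x hx => ⟨hf x hx, hes x⟩, hline, hX, sub_self]
    · obtain ⟨f, hfX, hfs, hfe⟩ := hf
      have hfle : F ∙ f ≤ X := (span_singleton_le_iff_mem f X).2 hfX
      have hsup : F ∙ e ⊔ F ∙ f = X := eq_of_le_of_finrank_eq (sup_le hle hfle) (by
        rw [finrank_sup_span_singleton hfe, hline, hX])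
      have hXs : TotallySingular φ X :=
        hsup ▸ hes.sup (totallySingular_span_singleton.2 hfs) (hfle.trans hperp)
      right; right; right
      rw [hXs.singularExcess, hX]
  · have hlt := finrank_lt_finrank_of_lt (inf_lt_left.2 hperp)
    have hinf : F ∙ e = X ⊓ perp φ (F ∙ e) :=
      eq_of_le_of_finrank_le (le_inf hle hes.le_perp) (by lia)
    right; right; left
    rw [singularExcess_eq_inf_perp hes hle, ← hinf, hes.singularExcess, hline, pow_one]

end SingularExcess

section Points

variable {F V : Type*} [Field F] [AddCommGroup V] [Module F V] {φ : QuadraticForm F V}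
  {p X : Submodule F V}

theorem exists_span_singleton_eq_of_finrank_eq_one (hp : finrank F p = 1) :
    ∃ u ≠ 0, F ∙ u = p := by
  obtain ⟨u, hu, hu0⟩ := exists_mem_ne_zero_of_ne_bot (p := p) (by rintro rfl; simp at hp)
  exact ⟨u, hu0, (eq_span_singleton_of_mem_of_finrank_eq_one hp hu hu0).symm⟩

/-- The points of the quadric of `φ` contained in `X`, as one-dimensional subspaces. -/
def singularPoints (φ : QuadraticForm F V) (X : Submodule F V) : Set (Submodule F V) :=
  {p | finrank F p = 1 ∧ p ≤ X ∧ TotallySingular φ p}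

/-- The points of `X` off the quadric of `φ`, as one-dimensional subspaces. -/
def nonsingularPoints (φ : QuadraticForm F V) (X : Submodule F V) : Set (Submodule F V) :=
  {p | finrank F p = 1 ∧ p ≤ X ∧ ¬ TotallySingular φ p}

variable [Finite F] [FiniteDimensional F V]

theorem ncard_points_mul_card_sub_one (P : Submodule F V → Prop) :
    {p : Submodule F V | finrank F p = 1 ∧ P p}.ncard * (Nat.card F - 1) =
      {v : V | v ≠ 0 ∧ P (F ∙ v)}.ncard := by
  classical
  have : Finite V := Module.finite_of_finite F
  set A := {v : V | v ≠ 0 ∧ P (F ∙ v)}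
  set B := {p : Submodule F V | finrank F p = 1 ∧ P p}
  have hmaps : ∀ v ∈ A.toFinite.toFinset, F ∙ v ∈ B.toFinite.toFinset := fun v hv => by
    rw [Set.Finite.mem_toFinset] at hv ⊢
    exact ⟨finrank_span_singleton hv.1, hv.2⟩
  have hfiber : ∀ p ∈ B.toFinite.toFinset,
      {v ∈ A.toFinite.toFinset | F ∙ v = p}.card = Nat.card F - 1 := fun p hp => by
    rw [Set.Finite.mem_toFinset] at hp
    have hset : ({v ∈ A.toFinite.toFinset | F ∙ v = p} : Finset V) = (p : Set V) \ {0} := by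
      ext v
      simp only [Finset.coe_filter, Set.Finite.mem_toFinset, Set.mem_ofPred_eq, Set.mem_sdiff,
        SetLike.mem_coe, Set.mem_singleton_iff]
      refine ⟨fun h => ⟨h.2 ▸ mem_span_singleton_self v, h.1.1⟩, fun h => ?_⟩
      have hv := eq_span_singleton_of_mem_of_finrank_eq_one hp.1 h.1 h.2
      exact ⟨⟨h.2, hv ▸ hp.2⟩, hv.symm⟩
    have hcard : (p : Set V).ncard = Nat.card F ^ finrank F p :=
      natCard_eq_pow_finrank (K := F) (V := p)
    rw [← Set.ncard_coe_finset, hset, Set.ncard_sdiff_singleton_of_mem p.zero_mem, hcard, hp.1,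
      pow_one]
  rw [Set.ncard_eq_toFinset_card A, Set.ncard_eq_toFinset_card B,
    Finset.card_eq_sum_card_fiberwise hmaps, Finset.sum_const_nat hfiber]

theorem ncard_singularPoints_mul_card_sub_one_add_one (φ : QuadraticForm F V)
    (X : Submodule F V) :
    (singularPoints φ X).ncard * (Nat.card F - 1) + 1 = {x ∈ X | φ x = 0}.ncard := by
  have : Finite V := Module.finite_of_finite F
  have hset : {v : V | v ≠ 0 ∧ F ∙ v ≤ X ∧ TotallySingular φ (F ∙ v)} =
      {x ∈ X | φ x = 0} \ {0} := by
    ext v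
    simp only [span_singleton_le_iff_mem, totallySingular_span_singleton, Set.mem_ofPred_eq,
      Set.mem_sdiff, Set.mem_singleton_iff, and_comm, ne_eq]
  have hzero : (0 : V) ∈ {x ∈ X | φ x = 0} := ⟨X.zero_mem, QuadraticMap.map_zero φ⟩
  rw [singularPoints, ncard_points_mul_card_sub_one, hset, Set.ncard_sdiff_singleton_add_one hzero]

theorem ncard_nonsingularPoints_mul_card_sub_one_add (φ : QuadraticForm F V)
    (X : Submodule F V) :
    (nonsingularPoints φ X).ncard * (Nat.card F - 1) + {x ∈ X | φ x = 0}.ncard = Nat.card X := by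
  have : Finite V := Module.finite_of_finite F
  have hset : {v : V | v ≠ 0 ∧ F ∙ v ≤ X ∧ ¬ TotallySingular φ (F ∙ v)} =
      (X : Set V) \ {x ∈ X | φ x = 0} := by
    ext v
    simp only [span_singleton_le_iff_mem, totallySingular_span_singleton, Set.mem_ofPred_eq,
      Set.mem_sdiff, SetLike.mem_coe, not_and]
    refine ⟨fun h => ⟨h.2.1, fun _ => h.2.2⟩, fun h => ⟨?_, h.1, h.2 h.1⟩⟩
    rintro rfl
    exact h.2 h.1 (QuadraticMap.map_zero φ)
  rw [nonsingularPoints, ncard_points_mul_card_sub_one, hset,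
    Set.ncard_sdiff_add_ncard_of_subset fun x hx => hx.1]
  rfl

theorem singularExcess_eq_mul_ncard_singularPoints (φ : QuadraticForm F V) (X : Submodule F V) :
    singularExcess φ X =
      Nat.card F * ((singularPoints φ X).ncard * (Nat.card F - 1) + 1) -
        (Nat.card F : ℤ) ^ finrank F X := by
  rw [singularExcess, ← ncard_singularPoints_mul_card_sub_one_add_one,
    natCard_eq_pow_finrank (K := F) (V := X)]
  push_cast [Nat.card_pos (α := F)]
  rfl

theorem mul_ncard_nonsingularPoints (φ : QuadraticForm F V) (X : Submodule F V) :
    (Nat.card F : ℤ) * (Nat.card F - 1) * (nonsingularPoints φ X).ncard =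
      (Nat.card F - 1) * (Nat.card F : ℤ) ^ finrank F X - singularExcess φ X := by
  have hcount := congrArg (Nat.cast (R := ℤ)) (ncard_nonsingularPoints_mul_card_sub_one_add φ X)
  rw [natCard_eq_pow_finrank (K := F) (V := X)] at hcount
  push_cast [Nat.card_pos (α := F)] at hcount
  rw [singularExcess, natCard_eq_pow_finrank (K := F) (V := X)]
  push_cast
  linear_combination (Nat.card F : ℤ) * hcount

theorem ncard_nonsingularPoints_eq_of_mul_eq {c : ℤ}
    (hc : (Nat.card F : ℤ) * (Nat.card F - 1) * c =
      (Nat.card F - 1) * (Nat.card F : ℤ) ^ finrank F X - singularExcess φ X) :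
    ((nonsingularPoints φ X).ncard : ℤ) = c := by
  have hq : (1 : ℤ) < Nat.card F := mod_cast Finite.one_lt_card (α := F)
  have hq0 : (Nat.card F : ℤ) * (Nat.card F - 1) ≠ 0 := mul_ne_zero (by lia) (by lia)
  refine mul_left_cancel₀ hq0 ?_
  rw [mul_ncard_nonsingularPoints, hc]

theorem ncard_nonsingularPoints_of_finrank_eq_two (hX : finrank F X = 2) :
    (nonsingularPoints φ X).ncard ∈
      ({0, Nat.card F - 1, Nat.card F, Nat.card F + 1} : Set ℕ) := by
  have hq : 1 < Nat.card F := Finite.one_lt_card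
  simp only [Set.mem_insert_iff, Set.mem_singleton_iff]
  zify [hq.le]
  obtain h | h | h | h := singularExcess_of_finrank_eq_two (φ := φ) hX
  · iterate 3 right
    apply ncard_nonsingularPoints_eq_of_mul_eq
    rw [h, hX]; ring
  · right; right; left
    apply ncard_nonsingularPoints_eq_of_mul_eq
    rw [h, hX]; ring
  · right; left
    apply ncard_nonsingularPoints_eq_of_mul_eq
    rw [h, hX]; ring
  · left
    apply ncard_nonsingularPoints_eq_of_mul_eq
    rw [h, hX]; ring

theorem ncard_singularPoints_eq_iff {k : ℕ} (hX : finrank F X = k + 1) :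
    (singularPoints φ X).ncard = (Nat.card F ^ k - 1) / (Nat.card F - 1) ↔
      singularExcess φ X = 0 := by
  have hq : 1 < Nat.card F := Finite.one_lt_card
  obtain ⟨c, hc⟩ := Nat.sub_one_dvd_pow_sub_one (Nat.card F) k
  have hpow : (Nat.card F : ℤ) ^ k = (Nat.card F - 1) * c + 1 := by
    have : 1 ≤ Nat.card F ^ k := Nat.one_le_pow _ _ hq.le
    zify [hq.le, this] at hc
    linear_combination hc
  have hexcess : singularExcess φ X =
      Nat.card F * (Nat.card F - 1) * ((singularPoints φ X).ncard - c) := by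
    rw [singularExcess_eq_mul_ncard_singularPoints, hX, pow_succ', hpow]
    ring
  have hq0 : (Nat.card F : ℤ) * (Nat.card F - 1) ≠ 0 := mul_ne_zero (by lia) (by lia)
  rw [hc, Nat.mul_div_cancel_left _ (Nat.sub_pos_of_lt hq), hexcess, mul_eq_zero_iff_left hq0,
    sub_eq_zero, Nat.cast_inj]

end Points

section ParabolicHyperplanes

variable {F V : Type*} [Field F] [AddCommGroup V] [Module F V] {φ : QuadraticForm F V}
  {n : ℕ} {p W : Submodule F V}

/-- The hyperplanes of a `(2n+2)`-dimensional space containing `(q^{2n}-1)/(q-1)` points of the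
quadric of `φ`, which is the number of points of a nonsingular parabolic quadric `Q(2n,q)`. The
division is exact. -/
def parabolicHyperplanes (φ : QuadraticForm F V) (n : ℕ) : Set (Submodule F V) :=
  {π | finrank F π = 2 * n + 1 ∧
    (singularPoints φ π).ncard = (Nat.card F ^ (2 * n) - 1) / (Nat.card F - 1)}

variable [Finite F] [FiniteDimensional F V]

theorem perp_mem_parabolicHyperplanes_iff (hφ : φ.polarBilin.Nondegenerate)
    (hV : finrank F V = 2 * n + 2) (hW : TotallySingular φ W) (hWdim : finrank F W = n + 1)
    (hp : finrank F p = 1) :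
    perp φ p ∈ parabolicHyperplanes φ n ↔ ¬ TotallySingular φ p := by
  have hdim : finrank F (perp φ p) = 2 * n + 1 := by
    have := finrank_perp_add_finrank hφ p
    lia
  have hperp : perp φ W = W := hW.perp_eq_self hφ (by lia)
  rw [parabolicHyperplanes, Set.mem_ofPred_eq, ncard_singularPoints_eq_iff hdim,
    and_iff_right hdim]
  obtain ⟨u, -, rfl⟩ := exists_span_singleton_eq_of_finrank_eq_one hp
  rw [totallySingular_span_singleton]
  refine ⟨fun h hu => ?_, singularExcess_perp_of_nonsingular hφ hW hperp⟩
  rw [singularExcess_perp_of_singular hW hperp hu, sub_eq_zero] at h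
  have := Nat.pow_lt_pow_right (Finite.one_lt_card (α := F)) (finrank F W).lt_succ_self
  exact this.ne' (mod_cast h)

theorem ncard_parabolicHyperplanes_ge (hφ : φ.polarBilin.Nondegenerate)
    (hV : finrank F V = 2 * n + 2) (hW : TotallySingular φ W) (hWdim : finrank F W = n + 1)
    (Y : Submodule F V) :
    {π ∈ parabolicHyperplanes φ n | Y ≤ π}.ncard = (nonsingularPoints φ (perp φ Y)).ncard := by
  have hmem {p : Submodule F V} := perp_mem_parabolicHyperplanes_iff (p := p) hφ hV hW hWdim
  refine Set.BijOn.ncard_eq (f := perp φ) (Set.InvOn.bijOn (f' := perp φ)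
    ⟨fun π _ => perp_perp hφ π, fun p _ => perp_perp hφ p⟩ ?_ ?_)
  · rintro π ⟨hπ, hYπ⟩
    have hdim : finrank F (perp φ π) = 1 := by
      have := finrank_perp_add_finrank hφ π
      have := hπ.1
      lia
    refine ⟨hdim, LinearMap.BilinForm.orthogonal_le hYπ, ?_⟩
    rwa [← hmem hdim, perp_perp hφ]
  · rintro p ⟨hp, hpY, hps⟩
    exact ⟨(hmem hp).2 hps, le_perp_comm.1 hpY⟩

theorem ncard_parabolicHyperplanes_ge_of_singular (hφ : φ.polarBilin.Nondegenerate)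
    (hV : finrank F V = 2 * n + 2) (hW : TotallySingular φ W) (hWdim : finrank F W = n + 1)
    (hp : finrank F p = 1) (hps : TotallySingular φ p) :
    {π ∈ parabolicHyperplanes φ n | p ≤ π}.ncard = Nat.card F ^ n * (Nat.card F ^ n - 1) := by
  have hdim := finrank_perp_add_finrank hφ p
  have hpow : 1 ≤ Nat.card F ^ n := Nat.one_le_pow _ _ Nat.card_pos
  rw [ncard_parabolicHyperplanes_ge hφ hV hW hWdim]
  zify [hpow]
  apply ncard_nonsingularPoints_eq_of_mul_eq
  obtain ⟨u, -, rfl⟩ := exists_span_singleton_eq_of_finrank_eq_one hp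
  rw [singularExcess_perp_of_singular hW (hW.perp_eq_self hφ (by lia))
    (totallySingular_span_singleton.1 hps), hWdim,
    show finrank F (perp φ (F ∙ u)) = 2 * n + 1 by lia]
  ring

theorem ncard_parabolicHyperplanes_ge_of_nonsingular (hφ : φ.polarBilin.Nondegenerate)
    (hV : finrank F V = 2 * n + 2) (hW : TotallySingular φ W) (hWdim : finrank F W = n + 1)
    (hp : finrank F p = 1) (hps : ¬ TotallySingular φ p) :
    {π ∈ parabolicHyperplanes φ n | p ≤ π}.ncard = Nat.card F ^ (2 * n) := by
  have hdim := finrank_perp_add_finrank hφ p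
  rw [ncard_parabolicHyperplanes_ge hφ hV hW hWdim]
  zify
  apply ncard_nonsingularPoints_eq_of_mul_eq
  obtain ⟨u, -, rfl⟩ := exists_span_singleton_eq_of_finrank_eq_one hp
  rw [singularExcess_perp_of_nonsingular hφ hW (hW.perp_eq_self hφ (by lia))
    (totallySingular_span_singleton.not.1 hps),
    show finrank F (perp φ (F ∙ u)) = 2 * n + 1 by lia]
  ring

theorem ncard_parabolicHyperplanes_ge_of_finrank_eq (hφ : φ.polarBilin.Nondegenerate)
    (hV : finrank F V = 2 * n + 2) (hW : TotallySingular φ W) (hWdim : finrank F W = n + 1)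
    {Y : Submodule F V} (hY : finrank F Y = 2 * n) :
    {π ∈ parabolicHyperplanes φ n | Y ≤ π}.ncard ∈
      ({0, Nat.card F - 1, Nat.card F, Nat.card F + 1} : Set ℕ) := by
  have hdim := finrank_perp_add_finrank hφ Y
  rw [ncard_parabolicHyperplanes_ge hφ hV hW hWdim]
  exact ncard_nonsingularPoints_of_finrank_eq_two (by lia)

theorem stmt_4_general (hφ : ∀ x, (∀ y, polar φ x y = 0) → x = 0)
    (hV : finrank F V = 2 * n + 2)
    (hhyperb : ∃ W : Submodule F V, finrank F W = n + 1 ∧ TotallySingular φ W) :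
    (∀ p : Submodule F V, finrank F p = 1 →
      (TotallySingular φ p →
        {π ∈ parabolicHyperplanes φ n | p ≤ π}.ncard = Nat.card F ^ n * (Nat.card F ^ n - 1)) ∧
      (¬ TotallySingular φ p →
        {π ∈ parabolicHyperplanes φ n | p ≤ π}.ncard = Nat.card F ^ (2 * n))) ∧
    (∀ Y : Submodule F V, finrank F Y = 2 * n →
      {π ∈ parabolicHyperplanes φ n | Y ≤ π}.ncard ∈
        ({0, Nat.card F - 1, Nat.card F, Nat.card F + 1} : Set ℕ)) := by
  obtain ⟨W, hWdim, hW⟩ := hhyperb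
  have hφ' : φ.polarBilin.Nondegenerate :=
    (isRefl_polarBilin φ).nondegenerate_iff_separatingLeft.2 hφ
  exact ⟨fun p hp => ⟨ncard_parabolicHyperplanes_ge_of_singular hφ' hV hW hWdim hp,
    ncard_parabolicHyperplanes_ge_of_nonsingular hφ' hV hW hWdim hp⟩,
    fun Y hY => ncard_parabolicHyperplanes_ge_of_finrank_eq hφ' hV hW hWdim hY⟩

end ParabolicHyperplanes

/-- For `n ≥ 1` and a nonsingular hyperbolic quadratic form `φ` on `F^{2n+2}` with
quadric `Q`, the family `S` of parabolic hyperplanes satisfies: (1) every point of `Q` lies in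
exactly `q^n(q^n-1)` members of `S` and every point off `Q` in exactly `q^{2n}`; (2) every
codimension-2 subspace lies in exactly `0`, `q-1`, `q` or `q+1` members of `S`. -/
theorem stmt_4 (n : ℕ) (hn : 1 ≤ n)
    (F : Type) [Field F] [Fintype F] (q : ℕ) (hq : Fintype.card F = q)
    (φ : QuadraticForm F (Fin (2*n+2) → F))
    (hnonsing : ∀ x, (∀ y, φ (x + y) - φ x - φ y = 0) → x = 0)
    (hhyperb : ∃ W : Submodule F (Fin (2*n+2) → F),
      Module.finrank F W = n+1 ∧ ∀ v ∈ W, φ v = 0)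
    (S : Set (Submodule F (Fin (2*n+2) → F)))
    (hSdef : S = {π : Submodule F (Fin (2*n+2) → F) | Module.finrank F π = 2*n+1 ∧
      {p : Submodule F (Fin (2*n+2) → F) |
        Module.finrank F p = 1 ∧ p ≤ π ∧ ∀ v ∈ p, φ v = 0}.ncard = (q^(2*n) - 1)/(q - 1)}) :
    (∀ p : Submodule F (Fin (2*n+2) → F), Module.finrank F p = 1 →
      ((∀ v ∈ p, φ v = 0) → {π ∈ S | p ≤ π}.ncard = q^n * (q^n - 1)) ∧
      (¬ (∀ v ∈ p, φ v = 0) → {π ∈ S | p ≤ π}.ncard = q^(2*n))) ∧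
    (∀ W : Submodule F (Fin (2*n+2) → F), Module.finrank F W = 2*n →
      {π ∈ S | W ≤ π}.ncard ∈ ({0, q - 1, q, q + 1} : Set ℕ)) := by
  subst hq hSdef
  simp only [← Nat.card_eq_fintype_card]
  exact stmt_4_general hnonsing (finrank_fin_fun F) hhyperb
end

section
/- Let n ≥ 1 and let Σ be a nonempty family of hyperplanes of PG(2n+1,q) satisfying property (P1^+), and let B be the set of black points. Then |B| = (q^{n+1}−1)(q^n+1)/(q−1); every hyperplane of PG(2n+1,q) contains exactly (q^{2n}−1)/(q−1) or exactly (q^{2n}+q^{n+1}−q^n−1)/(q−1) points of B (so B has the same hyperplane intersection numbers as a hyperbolic quadric Q^+(2n+1,q), i.e. B is a quasi-quadric); and Σ is precisely the set of all hyperplanes of PG(2n+1,q) containing exactly (q^{2n}−1)/(q−1) points of B. -/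
/-!
Count incident pairs (point, member of `Σ`) and incident triples (point, ordered pair of members of
`Σ`). With `x = q ^ n`, each point degree is a root of `(d - x ^ 2) * (d - x ^ 2 + x)`, so summing
this over all points gives a quadratic equation for `|Σ|`. One of its roots is `x * (q * x - 1)`;
the other one is not an integer because `x + 1` does not divide `x ^ 2 * (q * x + 1)`. Once `|Σ|` is
known, the sum of the degrees over all points, or over the points of a hyperplane `W`, determines
how many of these points are black, and in the second case the answer depends only on whether
`W ∈ Σ`.
-/

section PointCounting

open Module Finset

theorem finrank_inf_of_hyperplanes_ne {K V : Type*} [DivisionRing K] [AddCommGroup V] [Module K V]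
    {k : ℕ} {W U : Submodule K V} (hV : finrank K V = k + 2) (hW : finrank K W = k + 1)
    (hU : finrank K U = k + 1) (hne : W ≠ U) : finrank K (W ⊓ U : Submodule K V) = k := by
  have := Module.finite_of_finrank_eq_succ hV
  have hlt : W < W ⊔ U := by
    refine left_lt_sup.2 fun hUW ↦ hne ?_
    exact (Submodule.eq_of_le_of_finrank_eq hUW (hU.trans hW.symm)).symm
  have hsup_gt := Submodule.finrank_lt_finrank_of_lt hlt
  have hsup_le := (W ⊔ U).finrank_le
  have hsum := Submodule.finrank_sup_add_finrank_inf_eq W U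
  omega

variable {F V : Type*} [Field F] [AddCommGroup V] [Module F V]

local notation "q" => (Nat.card F : ℤ)

open Classical in
/-- The number of members of the family `T` of subspaces that contain the subspace `p`. -/
noncomputable def incidenceDegree (T : Finset (Submodule F V)) (p : Submodule F V) : ℕ :=
  #{π ∈ T | p ≤ π}

variable [Finite V]

/-- The points of the projective space of `V` lying in the subspace `W`, a point being a
one-dimensional subspace of `V`. -/
noncomputable def projPoints (W : Submodule F V) : Finset (Submodule F V) :=
  {p : Submodule F V | finrank F p = 1 ∧ p ≤ W}.toFinite.toFinset

@[simp]
theorem mem_projPoints {W p : Submodule F V} : p ∈ projPoints W ↔ finrank F p = 1 ∧ p ≤ W := by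
  simp [projPoints]

theorem card_projPoints_eq_card_projectivization (W : Submodule F V) :
    #(projPoints W) = Nat.card (Projectivization F W) := by
  have hmap (p : Submodule F W) :
      finrank F p = 1 ↔ finrank F (Submodule.MapSubtype.orderIso W p : Submodule F V) = 1 := by
    rw [(Submodule.equivSubtypeMap W p).finrank_eq]
    rfl
  let e : {p : Submodule F W // finrank F p = 1} ≃ {p : Submodule F V // p ∈ projPoints W} :=
    ((Submodule.MapSubtype.orderIso W).toEquiv.subtypeEquiv hmap).trans <|
      (Equiv.subtypeSubtypeEquivSubtypeInter (· ≤ W) (finrank F · = 1)).trans <|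
        Equiv.subtypeEquivRight fun p ↦ by rw [mem_projPoints, and_comm]
  rw [Nat.card_congr ((Projectivization.equivSubmodule F W).trans e), Nat.card_eq_fintype_card,
    Fintype.card_coe]

theorem sub_one_mul_card_projPoints [Finite F] (W : Submodule F V) :
    (q - 1) * #(projPoints W) = q ^ finrank F W - 1 := by
  rw [card_projPoints_eq_card_projectivization, Projectivization.card_of_finrank F W rfl]
  push_cast
  exact mul_geom_sum _ _

theorem sum_projPoints_mul_incidenceDegree {R : Type*} [Semiring R] (f : Submodule F V → R)
    (T : Finset (Submodule F V)) (W : Submodule F V) :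
    ∑ p ∈ projPoints W, f p * incidenceDegree T p = ∑ π ∈ T, ∑ p ∈ projPoints (W ⊓ π), f p := by
  classical
  have hinf (π : Submodule F V) : projPoints (W ⊓ π) = {p ∈ projPoints W | p ≤ π} := by
    ext p
    simp [and_assoc]
  calc ∑ p ∈ projPoints W, f p * incidenceDegree T p
      = ∑ p ∈ projPoints W, ∑ π ∈ T with p ≤ π, f p := by
        simp only [incidenceDegree, sum_const, nsmul_eq_mul, Nat.cast_comm]
    _ = ∑ π ∈ T, ∑ p ∈ projPoints (W ⊓ π), f p := by
        simp only [hinf]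
        exact sum_sum_bipartiteAbove_eq_sum_sum_bipartiteBelow (· ≤ ·) _

theorem sum_incidenceDegree (T : Finset (Submodule F V)) (W : Submodule F V) :
    ∑ p ∈ projPoints W, (incidenceDegree T p : ℤ) = ∑ π ∈ T, (#(projPoints (W ⊓ π)) : ℤ) := by
  simpa using sum_projPoints_mul_incidenceDegree (fun _ ↦ (1 : ℤ)) T W

variable [Finite F] {k : ℕ} {T : Finset (Submodule F V)}

theorem sub_one_mul_sum_incidenceDegree_top (hT : ∀ π ∈ T, finrank F π = k) :
    (q - 1) * ∑ p ∈ projPoints (⊤ : Submodule F V), (incidenceDegree T p : ℤ)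
      = #T * (q ^ k - 1) := by
  rw [sum_incidenceDegree, mul_sum, ← nsmul_eq_mul]
  refine sum_eq_card_nsmul fun π hπ ↦ ?_
  rw [top_inf_eq, sub_one_mul_card_projPoints, hT π hπ]

theorem sub_one_mul_sum_incidenceDegree_hyperplane [DecidableEq (Submodule F V)]
    (hV : finrank F V = k + 2) (hT : ∀ π ∈ T, finrank F π = k + 1)
    {W : Submodule F V} (hW : finrank F W = k + 1) :
    (q - 1) * ∑ p ∈ projPoints W, (incidenceDegree T p : ℤ)
      = #T * (q ^ k - 1) + if W ∈ T then (q - 1) * q ^ k else 0 := by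
  have hinter : ∀ π ∈ T, (q - 1) * #(projPoints (W ⊓ π))
      = (q ^ k - 1) + if W = π then (q - 1) * q ^ k else 0 := by
    intro π hπ
    rw [sub_one_mul_card_projPoints]
    split_ifs with hWπ
    · rw [← hWπ, inf_idem, hW]
      ring
    · rw [finrank_inf_of_hyperplanes_ne hV hW (hT π hπ) hWπ, add_zero]
  rw [sum_incidenceDegree, mul_sum, sum_congr rfl hinter, sum_add_distrib, sum_const,
    nsmul_eq_mul, sum_ite_eq]

theorem sub_one_mul_sum_incidenceDegree_sq (hV : finrank F V = k + 2)
    (hT : ∀ π ∈ T, finrank F π = k + 1) :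
    (q - 1) * ∑ p ∈ projPoints (⊤ : Submodule F V), (incidenceDegree T p : ℤ) ^ 2
      = #T * (#T * (q ^ k - 1) + (q - 1) * q ^ k) := by
  classical
  simp only [sq (incidenceDegree T _ : ℤ)]
  rw [sum_projPoints_mul_incidenceDegree, mul_sum, ← nsmul_eq_mul]
  refine sum_eq_card_nsmul fun π hπ ↦ ?_
  rw [top_inf_eq, sub_one_mul_sum_incidenceDegree_hyperplane hV hT (hT π hπ), if_pos hπ]

end PointCounting

section PropertyP1Plus

open Module Finset

theorem not_add_one_dvd_sq_mul_mul_add_one {a x : ℤ} (ha : 1 < a) (hax : a < x + 2) :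
    ¬ x + 1 ∣ x ^ 2 * (a * x + 1) := by
  intro hdvd
  have hdvd_sub : x + 1 ∣ a - 1 := by
    have hquot : a - 1 = (x + 1) * (x ^ 2 * a - (x - 1) * (a - 1)) - x ^ 2 * (a * x + 1) := by ring
    exact hquot ▸ (dvd_mul_right _ _).sub hdvd
  have := Int.le_of_dvd (by omega) hdvd_sub
  omega

variable {F V : Type*} [Field F] [AddCommGroup V] [Module F V]

local notation "q" => (Nat.card F : ℤ)

/-- `T` is a family of `(2n+1)`-dimensional subspaces satisfying property (P1⁺), with `q = |F|`.
These subspaces are the hyperplanes of `PG(2n+1, q)` when `V` has dimension `2n+2`, which is not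
part of this definition. -/
structure PropertyP1Plus (n : ℕ) (T : Finset (Submodule F V)) : Prop where
  finrank_eq : ∀ π ∈ T, finrank F π = 2 * n + 1
  incidenceDegree_eq_or : ∀ p : Submodule F V, finrank F p = 1 →
    incidenceDegree T p = Nat.card F ^ n * (Nat.card F ^ n - 1) ∨
      incidenceDegree T p = Nat.card F ^ (2 * n)

/-- The black points of the family `T` lying in the subspace `W`. -/
noncomputable def blackPoints [Finite V] (n : ℕ) (T : Finset (Submodule F V)) (W : Submodule F V) :
    Finset (Submodule F V) :=
  {p ∈ projPoints W | incidenceDegree T p = Nat.card F ^ n * (Nat.card F ^ n - 1)}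

namespace PropertyP1Plus

variable [Finite F] {n : ℕ} {T : Finset (Submodule F V)}

theorem incidenceDegree_eq_ite (h : PropertyP1Plus n T) {p : Submodule F V}
    (hp : finrank F p = 1) :
    (incidenceDegree T p : ℤ) = q ^ (2 * n) -
      if incidenceDegree T p = Nat.card F ^ n * (Nat.card F ^ n - 1) then q ^ n else 0 := by
  split_ifs with hblack
  · rw [hblack]
    push_cast [Nat.one_le_pow n _ Nat.card_pos]
    ring
  · rw [(h.incidenceDegree_eq_or p hp).resolve_left hblack]
    push_cast
    ring

theorem incidenceDegree_sq (h : PropertyP1Plus n T) {p : Submodule F V} (hp : finrank F p = 1) :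
    (incidenceDegree T p : ℤ) ^ 2 = (2 * q ^ (2 * n) - q ^ n) * incidenceDegree T p
      - q ^ (3 * n) * (q ^ n - 1) := by
  rw [h.incidenceDegree_eq_ite hp]
  split_ifs <;> ring

variable [Finite V] {W : Submodule F V}

theorem sum_incidenceDegree_eq (h : PropertyP1Plus n T) (W : Submodule F V) :
    ∑ p ∈ projPoints W, (incidenceDegree T p : ℤ)
      = q ^ (2 * n) * #(projPoints W) - q ^ n * #(blackPoints n T W) := by
  rw [sum_congr rfl fun p hp ↦ h.incidenceDegree_eq_ite (mem_projPoints.1 hp).1,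
    sum_sub_distrib, sum_const, ← sum_filter, ← blackPoints, sum_const, nsmul_eq_mul,
    nsmul_eq_mul, mul_comm, mul_comm (q ^ n)]

theorem sum_incidenceDegree_sq (h : PropertyP1Plus n T) (W : Submodule F V) :
    ∑ p ∈ projPoints W, (incidenceDegree T p : ℤ) ^ 2
      = (2 * q ^ (2 * n) - q ^ n) * ∑ p ∈ projPoints W, (incidenceDegree T p : ℤ)
        - #(projPoints W) * (q ^ (3 * n) * (q ^ n - 1)) := by
  rw [sum_congr rfl fun p hp ↦ h.incidenceDegree_sq (mem_projPoints.1 hp).1,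
    sum_sub_distrib, sum_const, nsmul_eq_mul, mul_sum]

theorem card_eq (h : PropertyP1Plus n T) (hn : n ≠ 0) (hV : finrank F V = 2 * n + 2) :
    (#T : ℤ) = q ^ n * (q ^ (n + 1) - 1) := by
  have hq : 1 < q := mod_cast Finite.one_lt_card (α := F)
  have hqn : q ≤ q ^ n := le_self_pow₀ hq.le hn
  have hpoints := sub_one_mul_card_projPoints (⊤ : Submodule F V)
  rw [finrank_top, hV] at hpoints
  have hfirst := sub_one_mul_sum_incidenceDegree_top h.finrank_eq
  have hsecond := sub_one_mul_sum_incidenceDegree_sq hV h.finrank_eq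
  rw [h.sum_incidenceDegree_sq] at hsecond
  have hquadratic : (q ^ n - 1) * (((q ^ n + 1) * #T - (q ^ n) ^ 2 * (q * q ^ n + 1)) *
      (#T - q ^ n * (q ^ (n + 1) - 1))) = 0 := by
    linear_combination (2 * q ^ (2 * n) - q ^ n) * hfirst - hsecond
      - q ^ (3 * n) * (q ^ n - 1) * hpoints
  have hfactors := (mul_eq_zero.1 hquadratic).resolve_left (by omega)
  have hspurious : (q ^ n + 1) * #T - (q ^ n) ^ 2 * (q * q ^ n + 1) ≠ 0 := fun h0 ↦
    not_add_one_dvd_sq_mul_mul_add_one hq (by omega) ⟨#T, (sub_eq_zero.1 h0).symm⟩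
  exact sub_eq_zero.1 ((mul_eq_zero.1 hfactors).resolve_left hspurious)

theorem sub_one_mul_card_blackPoints_top (h : PropertyP1Plus n T) (hn : n ≠ 0)
    (hV : finrank F V = 2 * n + 2) :
    (q - 1) * #(blackPoints n T (⊤ : Submodule F V)) = (q ^ (n + 1) - 1) * (q ^ n + 1) := by
  have hpoints := sub_one_mul_card_projPoints (⊤ : Submodule F V)
  rw [finrank_top, hV] at hpoints
  have hsum := sub_one_mul_sum_incidenceDegree_top h.finrank_eq
  rw [h.sum_incidenceDegree_eq, h.card_eq hn hV] at hsum
  have hqn : q ^ n ≠ 0 := pow_ne_zero _ (mod_cast Nat.card_pos.ne')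
  apply mul_left_cancel₀ hqn
  linear_combination q ^ (2 * n) * hpoints - hsum

theorem sub_one_mul_card_blackPoints_hyperplane [DecidableEq (Submodule F V)]
    (h : PropertyP1Plus n T) (hn : n ≠ 0) (hV : finrank F V = 2 * n + 2)
    (hW : finrank F W = 2 * n + 1) :
    (q - 1) * #(blackPoints n T W)
      = if W ∈ T then q ^ (2 * n) - 1 else q ^ (2 * n) + q ^ (n + 1) - q ^ n - 1 := by
  have hpoints := sub_one_mul_card_projPoints W
  rw [hW] at hpoints
  have hsum := sub_one_mul_sum_incidenceDegree_hyperplane hV h.finrank_eq hW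
  rw [h.sum_incidenceDegree_eq, h.card_eq hn hV] at hsum
  have hqn : q ^ n ≠ 0 := pow_ne_zero _ (mod_cast Nat.card_pos.ne')
  apply mul_left_cancel₀ hqn
  split_ifs at hsum ⊢ <;> linear_combination q ^ (2 * n) * hpoints - hsum

theorem card_blackPoints_top (h : PropertyP1Plus n T) (hn : n ≠ 0)
    (hV : finrank F V = 2 * n + 2) :
    #(blackPoints n T (⊤ : Submodule F V))
      = (Nat.card F ^ (n + 1) - 1) * (Nat.card F ^ n + 1) / (Nat.card F - 1) := by
  have hq : 1 < Nat.card F := Finite.one_lt_card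
  refine Nat.eq_div_of_mul_eq_right (by omega) ?_
  zify [hq.le, Nat.one_le_pow (n + 1) _ Nat.card_pos]
  exact h.sub_one_mul_card_blackPoints_top hn hV

theorem card_blackPoints_of_mem (h : PropertyP1Plus n T) (hn : n ≠ 0)
    (hV : finrank F V = 2 * n + 2) (hW : W ∈ T) :
    #(blackPoints n T W) = (Nat.card F ^ (2 * n) - 1) / (Nat.card F - 1) := by
  have hq : 1 < Nat.card F := Finite.one_lt_card
  refine Nat.eq_div_of_mul_eq_right (by omega) ?_
  zify [hq.le, Nat.one_le_pow (2 * n) _ Nat.card_pos]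
  classical rw [h.sub_one_mul_card_blackPoints_hyperplane hn hV (h.finrank_eq W hW), if_pos hW]

theorem card_blackPoints_of_notMem (h : PropertyP1Plus n T) (hn : n ≠ 0)
    (hV : finrank F V = 2 * n + 2) (hW : finrank F W = 2 * n + 1) (hWT : W ∉ T) :
    #(blackPoints n T W)
      = (Nat.card F ^ (2 * n) + Nat.card F ^ (n + 1) - Nat.card F ^ n - 1) / (Nat.card F - 1) := by
  have hq : 1 < Nat.card F := Finite.one_lt_card
  have hpow : Nat.card F ^ n ≤ Nat.card F ^ (n + 1) := Nat.pow_le_pow_right hq.le n.le_succ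
  have hpow_pos := Nat.one_le_pow (2 * n) _ hq.le
  refine Nat.eq_div_of_mul_eq_right (by omega) ?_
  zify [hq.le, hpow.trans (Nat.le_add_left _ _),
    show 1 ≤ Nat.card F ^ (2 * n) + Nat.card F ^ (n + 1) - Nat.card F ^ n by omega]
  classical rw [h.sub_one_mul_card_blackPoints_hyperplane hn hV hW, if_neg hWT]

theorem mem_iff_card_blackPoints (h : PropertyP1Plus n T) (hn : n ≠ 0)
    (hV : finrank F V = 2 * n + 2) :
    W ∈ T ↔ finrank F W = 2 * n + 1 ∧
      #(blackPoints n T W) = (Nat.card F ^ (2 * n) - 1) / (Nat.card F - 1) := by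
  refine ⟨fun hW ↦ ⟨h.finrank_eq W hW, h.card_blackPoints_of_mem hn hV hW⟩, fun ⟨hW, hcard⟩ ↦ ?_⟩
  by_contra hWT
  have hq : 1 < Nat.card F := Finite.one_lt_card
  have hmem : (Nat.card F - 1) * #(blackPoints n T W) = Nat.card F ^ (2 * n) - 1 := by
    rw [hcard, Nat.mul_div_cancel' (Nat.sub_one_dvd_pow_sub_one _ _)]
  zify [hq.le, Nat.one_le_pow (2 * n) _ hq.le] at hmem
  classical rw [h.sub_one_mul_card_blackPoints_hyperplane hn hV hW, if_neg hWT] at hmem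
  have hpow : q ^ n < q ^ (n + 1) := mod_cast Nat.pow_lt_pow_succ hq
  linarith

end PropertyP1Plus

end PropertyP1Plus

open Module Finset in
theorem stmt_6_general {F V : Type*} [Field F] [Finite F] [AddCommGroup V] [Module F V]
    {n : ℕ} (hn : n ≠ 0) (hV : finrank F V = 2 * n + 2) {S B : Set (Submodule F V)}
    (hhyp : ∀ π ∈ S, finrank F π = 2 * n + 1)
    (hP1 : ∀ p : Submodule F V, finrank F p = 1 →
      {π ∈ S | p ≤ π}.ncard = Nat.card F ^ n * (Nat.card F ^ n - 1) ∨
        {π ∈ S | p ≤ π}.ncard = Nat.card F ^ (2 * n))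
    (hB : B = {p : Submodule F V | finrank F p = 1 ∧
      {π ∈ S | p ≤ π}.ncard = Nat.card F ^ n * (Nat.card F ^ n - 1)}) :
    B.ncard = (Nat.card F ^ (n + 1) - 1) * (Nat.card F ^ n + 1) / (Nat.card F - 1) ∧
    (∀ π : Submodule F V, finrank F π = 2 * n + 1 →
      {p ∈ B | p ≤ π}.ncard = (Nat.card F ^ (2 * n) - 1) / (Nat.card F - 1) ∨
      {p ∈ B | p ≤ π}.ncard =
        (Nat.card F ^ (2 * n) + Nat.card F ^ (n + 1) - Nat.card F ^ n - 1) / (Nat.card F - 1)) ∧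
    S = {π : Submodule F V | finrank F π = 2 * n + 1 ∧
      {p ∈ B | p ≤ π}.ncard = (Nat.card F ^ (2 * n) - 1) / (Nat.card F - 1)} := by
  have : FiniteDimensional F V := Module.finite_of_finrank_eq_succ hV
  have : Finite V := Module.finite_of_finite F
  lift S to Finset (Submodule F V) using S.toFinite
  have hdegree (p : Submodule F V) : {π ∈ (S : Set _) | p ≤ π}.ncard = incidenceDegree S p := by
    simp only [incidenceDegree, ← Set.ncard_coe_finset, coe_filter, mem_coe]
  simp only [hdegree] at hP1 hB
  have hblack (W : Submodule F V) : {p ∈ B | p ≤ W}.ncard = #(blackPoints n S W) := by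
    rw [← Set.ncard_coe_finset, hB]
    congr 1
    ext p
    simp [blackPoints, and_right_comm]
  have hB_top : B.ncard = #(blackPoints n S ⊤) := by simpa using hblack ⊤
  have h : PropertyP1Plus n S := ⟨hhyp, hP1⟩
  simp only [hblack, hB_top]
  refine ⟨h.card_blackPoints_top hn hV, fun W hW ↦ ?_, ?_⟩
  · by_cases hWS : W ∈ S
    · exact Or.inl (h.card_blackPoints_of_mem hn hV hWS)
    · exact Or.inr (h.card_blackPoints_of_notMem hn hV hW hWS)
  · ext W
    exact h.mem_iff_card_blackPoints hn hV

/-- For `n ≥ 1` and a nonempty family `S` of hyperplanes of `PG(2n+1,q)`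
satisfying (P1⁺), the set `B` of black points has size `(q^{n+1}-1)(q^n+1)/(q-1)`, every
hyperplane meets `B` in exactly `(q^{2n}-1)/(q-1)` or `(q^{2n}+q^{n+1}-q^n-1)/(q-1)` points
(so `B` is a quasi-quadric of hyperbolic type), and `S` is precisely the set of hyperplanes
meeting `B` in exactly `(q^{2n}-1)/(q-1)` points. -/
theorem stmt_6 (n : ℕ) (hn : 1 ≤ n)
    (F : Type) [Field F] [Fintype F] (q : ℕ) (hq : Fintype.card F = q)
    (S : Set (Submodule F (Fin (2*n+2) → F)))
    (hS : S.Nonempty)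
    (hhyp : ∀ π ∈ S, Module.finrank F π = 2*n+1)
    (hP1 : ∀ p : Submodule F (Fin (2*n+2) → F), Module.finrank F p = 1 →
      {π ∈ S | p ≤ π}.ncard = q^n * (q^n - 1) ∨ {π ∈ S | p ≤ π}.ncard = q^(2*n))
    (B : Set (Submodule F (Fin (2*n+2) → F)))
    (hB : B = {p : Submodule F (Fin (2*n+2) → F) | Module.finrank F p = 1 ∧
      {π ∈ S | p ≤ π}.ncard = q^n * (q^n - 1)}) :
    B.ncard = (q^(n+1) - 1) * (q^n + 1) / (q - 1) ∧
    (∀ π : Submodule F (Fin (2*n+2) → F), Module.finrank F π = 2*n+1 →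
      {p ∈ B | p ≤ π}.ncard = (q^(2*n) - 1)/(q - 1) ∨
      {p ∈ B | p ≤ π}.ncard = (q^(2*n) + q^(n+1) - q^n - 1)/(q - 1)) ∧
    S = {π : Submodule F (Fin (2*n+2) → F) | Module.finrank F π = 2*n+1 ∧
      {p ∈ B | p ≤ π}.ncard = (q^(2*n) - 1)/(q - 1)} := by
  subst hq
  simp only [Fintype.card_eq_nat_card] at hP1 hB ⊢
  exact stmt_6_general (Nat.one_le_iff_ne_zero.1 hn) (Module.finrank_fin_fun F) hhyp hP1 hB
end
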